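/- For every dimension d ≥ 1 there exists a constant c > 0 independent of the mesh size h and the spline degree p (possibly depending on d) such that for every tensor product spline u ∈ S^d on Ω = (0,1)^d: c^{-1}|u|_{H^1(Ω)}^2 ≤ Σ_{α∈{0,1}^d} |Q_α u|_{H^1(Ω)}^2 ≤ c |u|_{H^1(Ω)}^2, and the analogous two-sided bound holds for the full H^1(Ω)-norm. That is, the L2-orthogonal splitting S^d = ⊕_{α∈{0,1}^d} S_α is H^1-stable uniformly in h and p. -/

import Mathlib

noncomputable section

open MeasureTheory Set

namespace SplineMG

/-- The `j`-th piece of the uniform partition of `[0,1]` into `m` subintervals of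
length `h = 1/m`; the first and last pieces are extended to `-∞` resp. `+∞`
(the spline is extended polynomially outside `[0,1]`). -/
def pieceSet (m j : ℕ) : Set ℝ :=
  (if j = 0 then Iic ((1 : ℝ) / m) else Icc ((j : ℝ) / m) (((j : ℝ) + 1) / m)) ∪
  (if j = m - 1 then Ici (((m : ℝ) - 1) / m) else ∅)

/-- `u : ℝ → ℝ` belongs to the univariate spline space `S` of degree `p` and maximal
smoothness `C^{p-1}` on the uniform partition of `(0,1)` into `m` intervals of
length `h = 1/m`. -/
def IsSpline (m p : ℕ) (u : ℝ → ℝ) : Prop :=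
  ContDiffOn ℝ (p - 1 : ℕ) u (Ioo (0 : ℝ) 1) ∧
  ∀ j < m, ∃ q : Polynomial ℝ, q.natDegree ≤ p ∧ ∀ x ∈ pieceSet m j, u x = q.eval x

/-- `u` belongs to the subspace `S₀` of `S`: all odd derivatives of order `< p`
vanish at both endpoints. -/
def IsSpline0 (m p : ℕ) (u : ℝ → ℝ) : Prop :=
  IsSpline m p u ∧
  ∀ l : ℕ, 2 * l + 1 < p →
    iteratedDeriv (2 * l + 1) u 0 = 0 ∧ iteratedDeriv (2 * l + 1) u 1 = 0

/-- The `L²(0,1)` inner product. -/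
def ip0 (u v : ℝ → ℝ) : ℝ := ∫ x in Ioo (0 : ℝ) 1, u x * v x

/-- The squared `L²(0,1)` norm `‖u‖₀²`. -/
def l2normSq (u : ℝ → ℝ) : ℝ := ∫ x in Ioo (0 : ℝ) 1, u x ^ 2

/-- The `L²(0,1)` norm `‖u‖₀`. -/
def l2norm (u : ℝ → ℝ) : ℝ := Real.sqrt (l2normSq u)

/-- The squared `H¹(0,1)` seminorm `|u|₁²`. -/
def h1semiSq (u : ℝ → ℝ) : ℝ := ∫ x in Ioo (0 : ℝ) 1, deriv u x ^ 2

/-- The `H¹(0,1)` seminorm `|u|₁`. -/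
def h1semi (u : ℝ → ℝ) : ℝ := Real.sqrt (h1semiSq u)

/-- The squared full `H¹(0,1)` norm. -/
def h1normSq (u : ℝ → ℝ) : ℝ := l2normSq u + h1semiSq u

/-- `u` belongs to `S₁`, the `L²(0,1)`-orthogonal complement of `S₀` in `S`. -/
def IsSpline1 (m p : ℕ) (u : ℝ → ℝ) : Prop :=
  IsSpline m p u ∧ ∀ v, IsSpline0 m p v → ip0 u v = 0

/-- `v = Q₀ u` is the `L²(0,1)`-orthogonal projection of `u` onto `S₀`. -/
def IsL2Proj0 (m p : ℕ) (u v : ℝ → ℝ) : Prop :=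
  IsSpline0 m p v ∧ ∀ w, IsSpline0 m p w → ip0 (u - v) w = 0

/-- The component predicate: `false ↦ S₀`, `true ↦ S₁`. -/
def IsSplineC (m p : ℕ) : Bool → (ℝ → ℝ) → Prop
  | false => IsSpline0 m p
  | true => IsSpline1 m p

/-- The tensor-product spline space `S^d = S ⊗ ⋯ ⊗ S` on `(0,1)^d`. -/
def TensorSpline (d m p : ℕ) : Submodule ℝ ((Fin d → ℝ) → ℝ) :=
  Submodule.span ℝ {u | ∃ f : Fin d → ℝ → ℝ, (∀ i, IsSpline m p (f i)) ∧
    u = fun x => ∏ i, f i (x i)}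

/-- The subspace `S_α = S_{α₁} ⊗ ⋯ ⊗ S_{α_d}` of `S^d`, for `α ∈ {0,1}^d`
(`false ↦ 0`, `true ↦ 1`). -/
def TensorSplineSub (d m p : ℕ) (α : Fin d → Bool) : Submodule ℝ ((Fin d → ℝ) → ℝ) :=
  Submodule.span ℝ {u | ∃ f : Fin d → ℝ → ℝ, (∀ i, IsSplineC m p (α i) (f i)) ∧
    u = fun x => ∏ i, f i (x i)}

/-- The open unit cube `Ω = (0,1)^d`. -/
def cube (d : ℕ) : Set (Fin d → ℝ) := Set.univ.pi fun _ => Ioo (0 : ℝ) 1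

/-- The `i`-th partial derivative. -/
def pd (d : ℕ) (i : Fin d) (u : (Fin d → ℝ) → ℝ) : (Fin d → ℝ) → ℝ :=
  fun x => deriv (fun t => u (Function.update x i t)) (x i)

/-- The `L²(Ω)` inner product on the unit cube. -/
def ipd (d : ℕ) (u v : (Fin d → ℝ) → ℝ) : ℝ := ∫ x in cube d, u x * v x

/-- The squared `L²(Ω)` norm. -/
def l2normSqD (d : ℕ) (u : (Fin d → ℝ) → ℝ) : ℝ := ∫ x in cube d, u x ^ 2

/-- The bilinear form `a(u,v) = ∫_Ω (∇u·∇v + uv) dx`. -/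
def aForm (d : ℕ) (u v : (Fin d → ℝ) → ℝ) : ℝ :=
  ∫ x in cube d, (∑ i, pd d i u x * pd d i v x) + u x * v x

/-- The squared `H¹(Ω)` seminorm. -/
def h1semiSqD (d : ℕ) (u : (Fin d → ℝ) → ℝ) : ℝ :=
  ∫ x in cube d, ∑ i, pd d i u x ^ 2

/-- The squared full `H¹(Ω)` norm. -/
def h1normSqD (d : ℕ) (u : (Fin d → ℝ) → ℝ) : ℝ := l2normSqD d u + h1semiSqD d u

/-- `v = Q_α u` is the `L²(Ω)`-orthogonal projection of `u` onto `S_α`. -/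
def IsL2ProjSub (d m p : ℕ) (α : Fin d → Bool) (u v : (Fin d → ℝ) → ℝ) : Prop :=
  v ∈ TensorSplineSub d m p α ∧ ∀ w ∈ TensorSplineSub d m p α, ipd d (u - v) w = 0

/-- The coarse tensor-product spline space `(S_c)^d` (with `m/2` knot spans of
width `2h` per direction). -/
def TensorSplineCoarse (d m p : ℕ) : Submodule ℝ ((Fin d → ℝ) → ℝ) :=
  TensorSpline d (m / 2) p

/-- `v = T_c u` is the `a(·,·)`-orthogonal (Galerkin) projection of `u` onto `(S_c)^d`. -/
def IsGalerkinCoarseProj (d m p : ℕ) (u v : (Fin d → ℝ) → ℝ) : Prop :=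
  v ∈ TensorSplineCoarse d m p ∧ ∀ w ∈ TensorSplineCoarse d m p, aForm d (u - v) w = 0

end SplineMG

namespace SplineMG

lemma mem_pieceSet {m j : ℕ} (hj : j < m) (x : ℝ) : x ∈ pieceSet m j ↔
    (j = 0 ∨ (j : ℝ) / m ≤ x) ∧ (j + 1 = m ∨ x ≤ ((j : ℝ) + 1) / m) := by
  have hm : (0 : ℝ) < m := by exact_mod_cast (by omega : 0 < m)
  have hle : (j : ℝ) / m ≤ ((j : ℝ) + 1) / m := by gcongr; linarith
  unfold pieceSet
  by_cases h0 : j = 0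
  · by_cases h1 : j + 1 = m
    · have h2 : j = m - 1 := by omega
      have h3 : m = 1 := by omega
      subst h3
      subst h0
      simp only [mem_union]
      simp only [Nat.cast_zero, zero_div, Nat.cast_one]
      simp
      exact le_total x 1 |>.imp id (fun h => by linarith)
    · have h2 : ¬ j = m - 1 := by omega
      rw [if_pos h0, if_neg h2]
      simp [h0, h1]
      intro h
      omega
  · by_cases h1 : j + 1 = m
    · have h2 : j = m - 1 := by omega
      have h3 : ((m : ℝ) - 1) = j := by rw [← h1]; push_cast; ring
      rw [if_neg h0, if_pos h2, h3]
      simp only [mem_union, mem_Icc, mem_Ici, h0, h1, false_or, true_or, and_true]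
      tauto
    · have h2 : ¬ j = m - 1 := by omega
      rw [if_neg h0, if_neg h2]
      simp [h0, h1]

def idx (m : ℕ) (x : ℝ) : ℕ := min (m - 1) ⌊(m : ℝ) * x⌋₊

lemma idx_lt {m : ℕ} (hm : 1 ≤ m) (x : ℝ) : idx m x < m := by
  unfold idx; omega

lemma mem_idx {m : ℕ} (hm : 1 ≤ m) (x : ℝ) : x ∈ pieceSet m (idx m x) := by
  have hm' : (0 : ℝ) < m := by exact_mod_cast (by omega : 0 < m)
  rw [mem_pieceSet (idx_lt hm x)]
  constructor
  · by_cases h : idx m x = 0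
    · exact Or.inl h
    · right
      have h1 : idx m x ≤ ⌊(m : ℝ) * x⌋₊ := min_le_right _ _
      have h2 : ⌊(m : ℝ) * x⌋₊ ≠ 0 := by omega
      have h3 : ((⌊(m : ℝ) * x⌋₊ : ℕ) : ℝ) ≤ m * x := Nat.floor_le (by
        by_contra hc
        exact h2 (Nat.floor_of_nonpos (by linarith)))
      have h4 : ((idx m x : ℕ) : ℝ) ≤ (⌊(m : ℝ) * x⌋₊ : ℕ) := by exact_mod_cast h1
      rw [div_le_iff₀ hm']
      linarith
  · by_cases h : idx m x + 1 = m
    · exact Or.inl h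
    · right
      have h1 : idx m x = ⌊(m : ℝ) * x⌋₊ := by unfold idx at *; omega
      have h3 := Nat.lt_floor_add_one ((m : ℝ) * x)
      rw [le_div_iff₀ hm', h1]
      linarith

lemma isClosed_pieceSet (m j : ℕ) : IsClosed (pieceSet m j) := by
  unfold pieceSet
  split_ifs
  · exact isClosed_Iic.union isClosed_Ici
  · exact isClosed_Iic.union isClosed_empty
  · exact isClosed_Icc.union isClosed_Ici
  · exact isClosed_Icc.union isClosed_empty

lemma ordConnected_pieceSet {m j : ℕ} (hj : j < m) : OrdConnected (pieceSet m j) := by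
  refine ⟨fun x hx y hy z hz => ?_⟩
  rw [mem_pieceSet hj] at *
  refine ⟨hx.1.imp id (fun h => h.trans hz.1), hy.2.imp id (fun h => hz.2.trans h)⟩

lemma Ioo_subset_pieceSet {m j : ℕ} (hj : j < m) :
    Ioo ((j : ℝ) / m) (((j : ℝ) + 1) / m) ⊆ pieceSet m j := by
  intro x hx
  rw [mem_pieceSet hj]
  exact ⟨Or.inr hx.1.le, Or.inr hx.2.le⟩

lemma Icc_subset_pieceSet {m j : ℕ} (hj : j < m) :
    Icc ((j : ℝ) / m) (((j : ℝ) + 1) / m) ⊆ pieceSet m j := by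
  intro x hx
  rw [mem_pieceSet hj]
  exact ⟨Or.inr hx.1, Or.inr hx.2⟩

lemma knot_lt {m : ℕ} (hm : 1 ≤ m) (j : ℕ) : (j : ℝ) / m < ((j : ℝ) + 1) / m := by
  have hm' : (0 : ℝ) < m := by exact_mod_cast (by omega : 0 < m)
  gcongr; linarith

lemma uniqueDiff_pieceSet {m j : ℕ} (hj : j < m) : UniqueDiffOn ℝ (pieceSet m j) := by
  apply uniqueDiffOn_convex (ordConnected_pieceSet hj).convex
  have h1 : Ioo ((j : ℝ) / m) (((j : ℝ) + 1) / m) ⊆ interior (pieceSet m j) :=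
    interior_maximal (Ioo_subset_pieceSet hj) isOpen_Ioo
  exact (nonempty_Ioo.2 (knot_lt (by omega) j)).mono h1

def knots (m : ℕ) : Set ℝ := range (fun j : ℕ => (j : ℝ) / m)

lemma knots_countable (m : ℕ) : (knots m).Countable := countable_range _

lemma piece_nhds {m j : ℕ} (hj : j < m) {x : ℝ} (hx : x ∈ pieceSet m j) (hk : x ∉ knots m) :
    pieceSet m j ∈ nhds x := by
  have h1 : x ≠ (j : ℝ) / m := fun h => hk ⟨j, h.symm⟩
  have h2 : x ≠ ((j : ℝ) + 1) / m := fun h => hk ⟨j + 1, by simp [h]⟩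
  rw [mem_pieceSet hj] at hx
  have e : pieceSet m j = {x | j = 0 ∨ (j : ℝ) / m ≤ x} ∩ {x | j + 1 = m ∨ x ≤ ((j : ℝ) + 1) / m} := by
    ext y; rw [mem_pieceSet hj]; rfl
  rw [e]
  apply Filter.inter_mem
  · rcases hx.1 with h | h
    · exact Filter.mem_of_superset Filter.univ_mem (fun y _ => Or.inl h)
    · exact Filter.mem_of_superset (Ioi_mem_nhds (lt_of_le_of_ne h h1.symm)) (fun y hy => Or.inr (le_of_lt hy))
  · rcases hx.2 with h | h
    · exact Filter.mem_of_superset Filter.univ_mem (fun y _ => Or.inl h)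
    · exact Filter.mem_of_superset (Iio_mem_nhds (lt_of_le_of_ne h h2)) (fun y hy => Or.inr (le_of_lt hy))

lemma piece_nhds_left {m : ℕ} (hm : 1 ≤ m) {x : ℝ} (hx : x ≤ 0) : pieceSet m 0 ∈ nhds x := by
  have hm' : (0 : ℝ) < m := by exact_mod_cast (by omega : 0 < m)
  have : (0 : ℝ) < 1 / m := by positivity
  refine Filter.mem_of_superset (Iio_mem_nhds (show x < 1 / m by linarith)) (fun y hy => ?_)
  rw [mem_pieceSet (by omega)]
  refine ⟨Or.inl rfl, Or.inr ?_⟩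
  have hy' : y < 1 / m := hy
  simpa using hy'.le

lemma piece_nhds_right {m : ℕ} (hm : 1 ≤ m) {x : ℝ} (hx : 1 ≤ x) : pieceSet m (m - 1) ∈ nhds x := by
  have hm' : (0 : ℝ) < m := by exact_mod_cast (by omega : 0 < m)
  have h1 : (((m - 1 : ℕ) : ℝ)) / m < 1 := by
    rw [div_lt_one hm']
    exact_mod_cast (by omega : m - 1 < m)
  refine Filter.mem_of_superset (Ioi_mem_nhds (h1.trans_le hx)) (fun y hy => ?_)
  rw [mem_pieceSet (by omega)]
  exact ⟨Or.inr (le_of_lt hy), Or.inl (by omega)⟩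

lemma continuous_of_pieces {m : ℕ} (hm : 1 ≤ m) {u : ℝ → ℝ}
    (h : ∀ j < m, ∃ q : Polynomial ℝ, ∀ x ∈ pieceSet m j, u x = q.eval x) : Continuous u := by
  have hf : LocallyFinite (fun j : Fin m => pieceSet m j) := locallyFinite_of_finite _
  refine hf.continuous ?_ (fun j => isClosed_pieceSet m j) ?_
  · rw [eq_univ_iff_forall]
    intro x
    exact mem_iUnion.2 ⟨⟨idx m x, idx_lt hm x⟩, mem_idx hm x⟩
  · intro j
    obtain ⟨q, hq⟩ := h j j.2
    exact q.continuous.continuousOn.congr hq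

lemma IsSpline.continuous {m p : ℕ} (hm : 1 ≤ m) {u : ℝ → ℝ} (h : IsSpline m p u) : Continuous u :=
  continuous_of_pieces hm (fun j hj => by
    obtain ⟨q, _, hq⟩ := h.2 j hj
    exact ⟨q, hq⟩)

lemma IsSpline.differentiableAt {m p : ℕ} (hm : 1 ≤ m) {u : ℝ → ℝ} (h : IsSpline m p u) {x : ℝ}
    (hx : x ∉ knots m) : DifferentiableAt ℝ u x := by
  obtain ⟨q, _, hq⟩ := h.2 _ (idx_lt hm x)
  have h1 : u =ᶠ[nhds x] fun x => q.eval x :=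
    Filter.mem_of_superset (piece_nhds (idx_lt hm x) (mem_idx hm x) hx) hq
  exact q.differentiableAt.congr_of_eventuallyEq h1

lemma poly_contDiff (q : Polynomial ℝ) (n : ℕ) : ContDiff ℝ n (fun x => q.eval x) := by
  simpa [Polynomial.coe_aeval_eq_eval] using Polynomial.contDiff_aeval (𝕜 := ℝ) (R := ℝ) q n

lemma IsSpline.contDiffAt_left {m p : ℕ} (hm : 1 ≤ m) {u : ℝ → ℝ} (h : IsSpline m p u) {x : ℝ}
    (hx : x ≤ 0) (n : ℕ) : ContDiffAt ℝ n u x := by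
  obtain ⟨q, _, hq⟩ := h.2 0 (by omega)
  have h1 : u =ᶠ[nhds x] fun x => q.eval x :=
    Filter.mem_of_superset (piece_nhds_left hm hx) hq
  exact (poly_contDiff q n).contDiffAt.congr_of_eventuallyEq h1

lemma IsSpline.contDiffAt_right {m p : ℕ} (hm : 1 ≤ m) {u : ℝ → ℝ} (h : IsSpline m p u) {x : ℝ}
    (hx : 1 ≤ x) (n : ℕ) : ContDiffAt ℝ n u x := by
  obtain ⟨q, _, hq⟩ := h.2 (m - 1) (by omega)
  have h1 : u =ᶠ[nhds x] fun x => q.eval x :=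
    Filter.mem_of_superset (piece_nhds_right hm hx) hq
  exact (poly_contDiff q n).contDiffAt.congr_of_eventuallyEq h1

lemma IsSpline.differentiable {m p : ℕ} (hm : 1 ≤ m) (hp : 1 ≤ p) {u : ℝ → ℝ}
    (h : IsSpline m (p + 1) u) : Differentiable ℝ u := by
  intro x
  by_cases hx0 : x ≤ 0
  · exact (h.contDiffAt_left hm hx0 1).differentiableAt (by simp)
  by_cases hx1 : 1 ≤ x
  · exact (h.contDiffAt_right hm hx1 1).differentiableAt (by simp)
  have hx : x ∈ Ioo (0 : ℝ) 1 := ⟨by linarith, by linarith⟩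
  have h1 := h.1
  have h2 : DifferentiableOn ℝ u (Ioo 0 1) := h1.differentiableOn (by
    simp; omega)
  exact (h2 x hx).differentiableAt (isOpen_Ioo.mem_nhds hx)

lemma IsSpline.derivS {m p : ℕ} (hm : 1 ≤ m) (hp : 1 ≤ p) {u : ℝ → ℝ}
    (h : IsSpline m (p + 1) u) : IsSpline m p (deriv u) := by
  refine ⟨?_, fun j hj => ?_⟩
  · have h1 := h.1
    refine h1.deriv_of_isOpen isOpen_Ioo ?_
    have : p - 1 + 1 ≤ p + 1 - 1 := by omega
    exact_mod_cast this
  · obtain ⟨q, hd, hq⟩ := h.2 j hj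
    refine ⟨Polynomial.derivative q, ?_, fun x hx => ?_⟩
    · have := Polynomial.natDegree_derivative_le q
      omega
    · have hu := uniqueDiff_pieceSet hj x hx
      rw [← (h.differentiable hm hp x).derivWithin hu, ← q.deriv,
        ← q.differentiableAt.derivWithin hu]
      exact derivWithin_congr hq (hq x hx)

lemma poly_antideriv (q : Polynomial ℝ) (p : ℕ) (hq : q.natDegree ≤ p) :
    ∃ Q : Polynomial ℝ, Q.natDegree ≤ p + 1 ∧ Polynomial.derivative Q = q := by
  refine ⟨∑ i ∈ Finset.range (p + 1), Polynomial.monomial (i + 1) (q.coeff i / (i + 1)), ?_, ?_⟩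
  · apply Polynomial.natDegree_sum_le_of_forall_le
    intro i hi
    have := Finset.mem_range.1 hi
    exact (Polynomial.natDegree_monomial_le _).trans (by omega)
  · rw [Polynomial.derivative_sum]
    conv_rhs => rw [q.as_sum_range' (p + 1) (by omega)]
    refine Finset.sum_congr rfl fun i _ => ?_
    rw [Polynomial.derivative_monomial]
    have : (i : ℝ) + 1 ≠ 0 := by positivity
    simp
    field_simp

lemma hasDerivAt_anti {g : ℝ → ℝ} (hg : Continuous g) (c x : ℝ) :
    HasDerivAt (fun x => c + ∫ t in (0 : ℝ)..x, g t) (g x) x :=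
  (intervalIntegral.integral_hasDerivAt_right (hg.intervalIntegrable _ _)
    (hg.stronglyMeasurableAtFilter _ _) hg.continuousAt).const_add c

lemma IsSpline.anti {m p : ℕ} (hm : 1 ≤ m) (hp : 1 ≤ p) {g : ℝ → ℝ}
    (h : IsSpline m p g) (c : ℝ) : IsSpline m (p + 1) (fun x => c + ∫ t in (0 : ℝ)..x, g t) := by
  have hg := h.continuous hm
  refine ⟨?_, fun j hj => ?_⟩
  · have e : ((p + 1 - 1 : ℕ) : WithTop ℕ∞) = ((p - 1 : ℕ) : WithTop ℕ∞) + 1 := by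
      have : p + 1 - 1 = p - 1 + 1 := by omega
      rw [this]; push_cast; rfl
    rw [e, contDiffOn_succ_iff_deriv_of_isOpen isOpen_Ioo]
    refine ⟨fun x _ => (hasDerivAt_anti hg c x).differentiableAt.differentiableWithinAt, by simp, ?_⟩
    exact h.1.congr (fun x _ => (hasDerivAt_anti hg c x).deriv)
  · obtain ⟨q, hd, hq⟩ := h.2 j hj
    obtain ⟨Q, hQd, hQ⟩ := poly_antideriv q p hd
    set a : ℝ := (j : ℝ) / m with ha
    have haS : a ∈ pieceSet m j := Icc_subset_pieceSet hj ⟨le_rfl, (knot_lt hm j).le⟩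
    refine ⟨Q + Polynomial.C (c + (∫ t in (0 : ℝ)..a, g t) - Q.eval a), ?_, fun x hx => ?_⟩
    · exact (Polynomial.natDegree_add_C).le.trans hQd
    · have h1 : (∫ t in (0 : ℝ)..x, g t) = (∫ t in (0 : ℝ)..a, g t) + ∫ t in a..x, g t :=
        (intervalIntegral.integral_add_adjacent_intervals (hg.intervalIntegrable _ _)
          (hg.intervalIntegrable _ _)).symm
      have h2 : (∫ t in a..x, g t) = ∫ t in a..x, q.eval t :=
        intervalIntegral.integral_congr (fun t ht => hq t ((ordConnected_pieceSet hj).uIcc_subset haS hx ht))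
      have h3 : (∫ t in a..x, q.eval t) = Q.eval x - Q.eval a :=
        intervalIntegral.integral_eq_sub_of_hasDerivAt (fun t _ => by
          have := Q.hasDerivAt t
          rwa [hQ] at this) (q.continuous.intervalIntegrable _ _)
      simp only [h1, h2, h3, Polynomial.eval_add, Polynomial.eval_C]
      ring

/-- spline with boundary conditions of parity `b` -/
def Sp (b m p : ℕ) (u : ℝ → ℝ) : Prop :=
  IsSpline m p u ∧ ∀ k < p, k % 2 = b → iteratedDeriv k u 0 = 0 ∧ iteratedDeriv k u 1 = 0

lemma isSpline0_iff {m p : ℕ} {u : ℝ → ℝ} : IsSpline0 m p u ↔ Sp 1 m p u := by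
  unfold IsSpline0 Sp
  refine and_congr_right fun _ => ⟨fun h k hk hk2 => ?_, fun h l hl => h _ hl (by omega)⟩
  have : k = 2 * (k / 2) + 1 := by omega
  rw [this]
  exact h _ (by omega)

lemma Sp.derivS {b m p : ℕ} (hb : b < 2) (hm : 1 ≤ m) (hp : 1 ≤ p) {u : ℝ → ℝ} (h : Sp b m (p + 1) u) :
    Sp (1 - b) m p (deriv u) := by
  refine ⟨h.1.derivS hm hp, fun k hk hk2 => ?_⟩
  rw [← iteratedDeriv_succ']
  exact h.2 (k + 1) (by omega) (by omega)

lemma Sp.anti {b m p : ℕ} (hb : b < 2) (hm : 1 ≤ m) (hp : 1 ≤ p) {g : ℝ → ℝ} (h : Sp (1 - b) m p g) (c : ℝ)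
    (h0 : b = 0 → c = 0 ∧ c + ∫ t in (0 : ℝ)..1, g t = 0) :
    Sp b m (p + 1) (fun x => c + ∫ t in (0 : ℝ)..x, g t) := by
  refine ⟨h.1.anti hm hp c, fun k hk hk2 => ?_⟩
  rcases k with _ | k
  · have := h0 (by omega)
    simp only [iteratedDeriv_zero]
    refine ⟨by simp [this.1], this.2⟩
  · rw [iteratedDeriv_succ']
    have : _root_.deriv (fun x => c + ∫ t in (0 : ℝ)..x, g t) = g :=
      funext fun x => (hasDerivAt_anti (h.1.continuous hm) c x).deriv
    rw [this]
    exact h.2 k (by omega) (by omega)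

def SplS (m p : ℕ) : Submodule ℝ (ℝ → ℝ) where
  carrier := {u | IsSpline m p u}
  zero_mem' := ⟨contDiffOn_const, fun j _ => ⟨0, by simp, fun x _ => by simp⟩⟩
  add_mem' := by
    rintro u v ⟨hu, hu'⟩ ⟨hv, hv'⟩
    refine ⟨hu.add hv, fun j hj => ?_⟩
    obtain ⟨q, hq, hq'⟩ := hu' j hj
    obtain ⟨r, hr, hr'⟩ := hv' j hj
    exact ⟨q + r, (Polynomial.natDegree_add_le _ _).trans (max_le hq hr), fun x hx => by
      simp [hq' x hx, hr' x hx]⟩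
  smul_mem' := by
    rintro c u ⟨hu, hu'⟩
    refine ⟨contDiffOn_const.smul hu, fun j hj => ?_⟩
    obtain ⟨q, hq, hq'⟩ := hu' j hj
    exact ⟨c • q, (Polynomial.natDegree_smul_le _ _).trans hq, fun x hx => by
      simp [hq' x hx]⟩

def SpS (b m p : ℕ) (hm : 1 ≤ m) : Submodule ℝ (ℝ → ℝ) where
  carrier := {u | Sp b m p u}
  zero_mem' := ⟨(SplS m p).zero_mem, fun k _ _ => by
    have : iteratedDeriv k (0 : ℝ → ℝ) = 0 := by
      funext x
      have := iteratedDeriv_const (𝕜 := ℝ) (n := k) (c := (0:ℝ)) (x := x)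
      simpa [Pi.zero_def] using this
    rw [this]; simp⟩
  add_mem' := by
    rintro u v ⟨hu, hu'⟩ ⟨hv, hv'⟩
    refine ⟨(SplS m p).add_mem hu hv, fun k hk hkb => ?_⟩
    have h1 := hu' k hk hkb
    have h2 := hv' k hk hkb
    rw [iteratedDeriv_add (hu.contDiffAt_left hm le_rfl k) (hv.contDiffAt_left hm le_rfl k),
      iteratedDeriv_add (hu.contDiffAt_right hm le_rfl k) (hv.contDiffAt_right hm le_rfl k)]
    simp [h1, h2]
  smul_mem' := by
    rintro c u ⟨hu, hu'⟩
    refine ⟨(SplS m p).smul_mem c hu, fun k hk hkb => ?_⟩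
    have h1 := hu' k hk hkb
    rw [iteratedDeriv_const_smul (hu.contDiffAt_left hm le_rfl k),
      iteratedDeriv_const_smul (hu.contDiffAt_right hm le_rfl k)]
    simp [h1]

lemma SpS_le {b m p : ℕ} (hm : 1 ≤ m) : SpS b m p hm ≤ SplS m p := fun _ h => h.1

/-- gluing map -/
def glue (m p : ℕ) (hm : 1 ≤ m) : (Fin m → Polynomial.degreeLT ℝ (p + 1)) →ₗ[ℝ] (ℝ → ℝ) where
  toFun q := fun x => (q ⟨idx m x, idx_lt hm x⟩ : Polynomial ℝ).eval x
  map_add' := by intro q r; funext x; simp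
  map_smul' := by intro c r; funext x; simp

lemma SplS_le_glue {m p : ℕ} (hm : 1 ≤ m) : SplS m p ≤ LinearMap.range (glue m p hm) := by
  intro u hu
  choose q hd hq using hu.2
  refine ⟨fun j => ⟨q j j.2, ?_⟩, ?_⟩
  · rw [Polynomial.mem_degreeLT]
    have := hd j j.2
    exact (Polynomial.degree_le_natDegree).trans_lt (by exact_mod_cast (by omega))
  · funext x
    exact (hq _ (idx_lt hm x) x (mem_idx hm x)).symm

lemma SplS_fin {m p : ℕ} (hm : 1 ≤ m) : FiniteDimensional ℝ (SplS m p) := by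
  have : FiniteDimensional ℝ (Polynomial.degreeLT ℝ (p + 1)) :=
    (Polynomial.degreeLTEquiv ℝ (p + 1)).symm.finiteDimensional
  have : FiniteDimensional ℝ (LinearMap.range (glue m p hm)) := inferInstance
  exact Submodule.finiteDimensional_of_le (SplS_le_glue hm)

lemma Ioo_eq (f : ℝ → ℝ) : (∫ x in Ioo (0 : ℝ) 1, f x) = ∫ x in (0 : ℝ)..1, f x := by
  rw [intervalIntegral.integral_of_le zero_le_one, integral_Ioc_eq_integral_Ioo]

lemma ip0_eq (u v : ℝ → ℝ) : ip0 u v = ∫ x in (0 : ℝ)..1, u x * v x := Ioo_eq _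

lemma ip0_add {u u' v : ℝ → ℝ} (hu : Continuous u) (hu' : Continuous u') (hv : Continuous v) :
    ip0 (u + u') v = ip0 u v + ip0 u' v := by
  simp only [ip0_eq, Pi.add_apply, add_mul]
  exact intervalIntegral.integral_add ((hu.mul hv).intervalIntegrable _ _) ((hu'.mul hv).intervalIntegrable _ _)

lemma ip0_smul (c : ℝ) (u v : ℝ → ℝ) : ip0 (c • u) v = c * ip0 u v := by
  simp only [ip0_eq, Pi.smul_apply, smul_eq_mul, mul_assoc]
  exact intervalIntegral.integral_const_mul _ _

lemma ip0_comm (u v : ℝ → ℝ) : ip0 u v = ip0 v u := by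
  unfold ip0; simp only [mul_comm]

lemma IsSpline.eq_zero {m p : ℕ} (hm : 1 ≤ m) {u : ℝ → ℝ} (h : IsSpline m p u) (h0 : ip0 u u = 0) :
    u = 0 := by
  have hc := h.continuous hm
  have hm' : (0 : ℝ) < m := by exact_mod_cast (by omega : 0 < m)
  rw [ip0_eq] at h0
  have hz : ∀ x ∈ Icc (0 : ℝ) 1, u x = 0 := by
    by_contra! hne
    obtain ⟨x, hx, hux⟩ := hne
    have := intervalIntegral.integral_pos (f := fun x => u x * u x) zero_lt_one
      (hc.mul hc).continuousOn (fun y _ => mul_self_nonneg _) ⟨x, hx, mul_self_pos.2 hux⟩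
    linarith
  funext x
  obtain ⟨q, _, hq⟩ := h.2 _ (idx_lt hm x)
  have hj := idx_lt hm x
  set j := idx m x
  have hq0 : q = 0 := by
    apply Polynomial.eq_zero_of_infinite_isRoot
    refine (Icc_infinite (knot_lt hm j)).mono fun y hy => ?_
    have h1 := hq y (Icc_subset_pieceSet hj hy)
    have h2 : (j : ℝ) + 1 ≤ m := by exact_mod_cast hj
    have h3 : ((j : ℝ) + 1) / m ≤ 1 := by rw [div_le_one hm']; exact h2
    have h4 : 0 ≤ (j : ℝ) / m := by positivity
    rw [hz y ⟨h4.trans hy.1, hy.2.trans h3⟩] at h1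
    exact h1.symm
  rw [hq x (mem_idx hm x), hq0]
  simp

@[reducible] def ipCore {m p : ℕ} (hm : 1 ≤ m) (V : Submodule ℝ (ℝ → ℝ)) (hV : V ≤ SplS m p) :
    InnerProductSpace.Core ℝ V where
  inner u v := ip0 u v
  conj_inner_symm u v := by simp [ip0_comm]
  re_inner_nonneg u := by
    simp only [ip0, RCLike.re_to_real]
    exact integral_nonneg fun x => mul_self_nonneg _
  add_left u v w := ip0_add ((hV u.2).continuous hm) ((hV v.2).continuous hm) ((hV w.2).continuous hm)
  smul_left u v c := by simp [ip0_smul]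
  definite u h := by
    ext1
    exact (hV u.2).eq_zero hm h

set_option linter.style.haveILetI false in
lemma exists_onb {m p : ℕ} (hm : 1 ≤ m) (V : Submodule ℝ (ℝ → ℝ)) (hV : V ≤ SplS m p) :
    ∃ (n : ℕ) (e : Fin n → ℝ → ℝ), (∀ i, e i ∈ V) ∧ (∀ i j, ip0 (e i) (e j) = if i = j then 1 else 0) ∧
      ∀ u ∈ V, ∃ y : Fin n → ℝ, u = ∑ i, y i • e i := by
  have hfin := SplS_fin (p := p) hm
  have : FiniteDimensional ℝ V := Submodule.finiteDimensional_of_le hV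
  letI c := ipCore hm V hV
  letI := c.toNormedAddCommGroup
  letI : InnerProductSpace ℝ V := InnerProductSpace.ofCore c.toCore
  let b := stdOrthonormalBasis ℝ V
  refine ⟨_, fun i => (b i : ℝ → ℝ), fun i => (b i).2, fun i j => ?_, fun u hu => ?_⟩
  · have := orthonormal_iff_ite.1 b.orthonormal i j
    exact this
  · refine ⟨fun i => b.repr ⟨u, hu⟩ i, ?_⟩
    have := b.sum_repr ⟨u, hu⟩
    have h2 := congrArg (fun z : V => (z : ℝ → ℝ)) this
    simp only [Submodule.coe_sum, Submodule.coe_smul] at h2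
    exact h2.symm

end SplineMG

namespace SplineMG

def BM (m : ℕ) (g : ℝ → ℝ) : Prop :=
  Measurable g ∧ ∃ C : ℝ, ∀ x ∈ Icc (0 : ℝ) 1, x ∉ knots m → |g x| ≤ C

lemma ae_knots (m : ℕ) : ∀ᵐ x : ℝ, x ∉ knots m := (knots_countable m).ae_notMem _

lemma BM.of_cont {m : ℕ} {g : ℝ → ℝ} (h : Continuous g) : BM m g := by
  refine ⟨h.measurable, ?_⟩
  obtain ⟨C, hC⟩ := isCompact_Icc.exists_bound_of_continuousOn (s := Icc (0 : ℝ) 1) h.continuousOn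
  exact ⟨C, fun x hx _ => hC x hx⟩

lemma BM.mul {m : ℕ} {f g : ℝ → ℝ} (hf : BM m f) (hg : BM m g) : BM m (fun x => f x * g x) := by
  obtain ⟨C, hC⟩ := hf.2
  obtain ⟨D, hD⟩ := hg.2
  refine ⟨hf.1.mul hg.1, C * D, fun x hx hk => ?_⟩
  rw [abs_mul]
  exact mul_le_mul (hC x hx hk) (hD x hx hk) (abs_nonneg _) ((abs_nonneg _).trans (hC x hx hk))

lemma BM.sq {m : ℕ} {f : ℝ → ℝ} (hf : BM m f) : BM m (fun x => f x ^ 2) := by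
  simpa only [pow_two] using hf.mul hf

lemma BM.add {m : ℕ} {f g : ℝ → ℝ} (hf : BM m f) (hg : BM m g) : BM m (fun x => f x + g x) := by
  obtain ⟨C, hC⟩ := hf.2
  obtain ⟨D, hD⟩ := hg.2
  refine ⟨hf.1.add hg.1, C + D, fun x hx hk => ?_⟩
  exact (abs_add_le _ _).trans (add_le_add (hC x hx hk) (hD x hx hk))

lemma BM.const {m : ℕ} (c : ℝ) : BM m (fun _ => c) := BM.of_cont continuous_const

lemma BM.const_mul {m : ℕ} {f : ℝ → ℝ} (hf : BM m f) (c : ℝ) : BM m (fun x => c * f x) :=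
  (BM.const c).mul hf

lemma BM.sub {m : ℕ} {f g : ℝ → ℝ} (hf : BM m f) (hg : BM m g) : BM m (fun x => f x - g x) := by
  simpa only [sub_eq_add_neg, neg_one_mul] using hf.add (hg.const_mul (-1))

lemma BM.intervalIntegrable {m : ℕ} {g : ℝ → ℝ} (hg : BM m g) {a b : ℝ} (ha : 0 ≤ a) (hab : a ≤ b)
    (hb : b ≤ 1) : IntervalIntegrable g volume a b := by
  obtain ⟨C, hC⟩ := hg.2
  rw [intervalIntegrable_iff_integrableOn_Ioc_of_le hab]
  refine Measure.integrableOn_of_bounded (M := C) (by simp) hg.1.aestronglyMeasurable ?_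
  rw [ae_restrict_iff' measurableSet_Ioc]
  filter_upwards [ae_knots m] with x hx hx2
  exact hC x ⟨ha.trans hx2.1.le, hx2.2.trans hb⟩ hx

lemma BM.ii {m : ℕ} {g : ℝ → ℝ} (hg : BM m g) : IntervalIntegrable g volume 0 1 :=
  hg.intervalIntegrable le_rfl zero_le_one le_rfl

lemma BM.cs {m : ℕ} {f g : ℝ → ℝ} (hf : BM m f) (hg : BM m g) {a b : ℝ} (ha : 0 ≤ a) (hab : a ≤ b)
    (hb : b ≤ 1) : (∫ x in a..b, f x * g x) ^ 2 ≤ (∫ x in a..b, f x ^ 2) * ∫ x in a..b, g x ^ 2 := by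
  have key : ∀ t : ℝ, 0 ≤ (∫ x in a..b, g x ^ 2) * (t * t) + (2 * ∫ x in a..b, f x * g x) * t +
      ∫ x in a..b, f x ^ 2 := by
    intro t
    have h1 : (∫ x in a..b, (f x + t * g x) ^ 2) = (∫ x in a..b, g x ^ 2) * (t * t) +
        (2 * ∫ x in a..b, f x * g x) * t + ∫ x in a..b, f x ^ 2 := by
      have e : ∀ x, (f x + t * g x) ^ 2 = ((t * t) * g x ^ 2 + (2 * t) * (f x * g x)) + f x ^ 2 := by
        intro x; ring
      simp only [e]
      rw [intervalIntegral.integral_add, intervalIntegral.integral_add,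
        intervalIntegral.integral_const_mul, intervalIntegral.integral_const_mul]
      · ring
      · exact (hg.sq.const_mul _).intervalIntegrable ha hab hb
      · exact ((hf.mul hg).const_mul _).intervalIntegrable ha hab hb
      · exact ((hg.sq.const_mul _).add ((hf.mul hg).const_mul _)).intervalIntegrable ha hab hb
      · exact hf.sq.intervalIntegrable ha hab hb
    rw [← h1]
    exact intervalIntegral.integral_nonneg hab fun x _ => sq_nonneg _
  have := discrim_le_zero key
  unfold discrim at this
  nlinarith

lemma interval_congr {m : ℕ} {f g : ℝ → ℝ} {a b : ℝ} (hab : a ≤ b)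
    (h : ∀ x ∈ Ioc a b, x ∉ knots m → f x = g x) : (∫ x in a..b, f x) = ∫ x in a..b, g x := by
  apply intervalIntegral.integral_congr_ae
  filter_upwards [ae_knots m] with x hx hx2
  rw [uIoc_of_le hab] at hx2
  exact h x hx2 hx

def W (m : ℕ) (u : ℝ → ℝ) : Prop :=
  Continuous u ∧ (∀ x ∉ knots m, DifferentiableAt ℝ u x) ∧ BM m (deriv u)

lemma W.of_hasDeriv {m : ℕ} {u g : ℝ → ℝ} (hg : Continuous g) (h : ∀ x, HasDerivAt u (g x) x) : W m u := by
  have e : deriv u = g := funext fun x => (h x).deriv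
  have hd : Differentiable ℝ u := fun x => (h x).differentiableAt
  exact ⟨hd.continuous, fun x _ => hd x, by rw [e]; exact BM.of_cont hg⟩

lemma IsSpline.W {m p : ℕ} (hm : 1 ≤ m) {u : ℝ → ℝ} (h : IsSpline m p u) : W m u := by
  refine ⟨h.continuous hm, fun x hx => h.differentiableAt hm hx, measurable_deriv u, ?_⟩
  choose q _ hq using h.2
  have hb : ∀ j : Fin m, ∃ C : ℝ, ∀ x ∈ Icc (0 : ℝ) 1, ‖(Polynomial.derivative (q j j.2)).eval x‖ ≤ C :=
    fun j => isCompact_Icc.exists_bound_of_continuousOn (Polynomial.continuous _).continuousOn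
  choose C hC using hb
  refine ⟨∑ j, |C j|, fun x hx hk => ?_⟩
  have hj := idx_lt hm x
  have h1 : u =ᶠ[nhds x] fun x => (q _ hj).eval x :=
    Filter.mem_of_superset (piece_nhds (idx_lt hm x) (mem_idx hm x) hk) (hq _ hj)
  rw [h1.deriv_eq, Polynomial.deriv]
  calc _ ≤ C ⟨_, hj⟩ := hC ⟨_, hj⟩ x hx
    _ ≤ |C ⟨_, hj⟩| := le_abs_self _
    _ ≤ ∑ j, |C j| := Finset.single_le_sum (f := fun j => |C j|) (fun j _ => abs_nonneg _) (Finset.mem_univ _)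

lemma W.deriv_sub {m : ℕ} {u v : ℝ → ℝ} (hu : W m u) (hv : W m v) {x : ℝ} (hx : x ∉ knots m) :
    deriv (fun x => u x - v x) x = deriv u x - deriv v x :=
  deriv_fun_sub (hu.2.1 x hx) (hv.2.1 x hx)

lemma W.sub {m : ℕ} {u v : ℝ → ℝ} (hu : W m u) (hv : W m v) : W m (fun x => u x - v x) := by
  refine ⟨hu.1.sub hv.1, fun x hx => (hu.2.1 x hx).sub (hv.2.1 x hx), measurable_deriv _, ?_⟩
  obtain ⟨C, hC⟩ := (hu.2.2.sub hv.2.2).2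
  exact ⟨C, fun x hx hk => by rw [hu.deriv_sub hv hk]; exact hC x hx hk⟩

lemma W.bm {m : ℕ} {u : ℝ → ℝ} (hu : W m u) : BM m u := BM.of_cont hu.1

lemma W.ftc {m : ℕ} {u : ℝ → ℝ} (hu : W m u) {a b : ℝ} (ha : 0 ≤ a) (hab : a ≤ b) (hb : b ≤ 1) :
    (∫ x in a..b, deriv u x) = u b - u a :=
  MeasureTheory.integral_eq_of_hasDerivAt_off_countable_of_le u (deriv u) hab (knots_countable m)
    hu.1.continuousOn (fun x hx => (hu.2.1 x hx.2).hasDerivAt) (hu.2.2.intervalIntegrable ha hab hb)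

lemma W.ibp {m : ℕ} {u v : ℝ → ℝ} (hu : W m u) (hv : W m v) :
    (∫ x in (0 : ℝ)..1, deriv u x * v x) + (∫ x in (0 : ℝ)..1, u x * deriv v x) = u 1 * v 1 - u 0 * v 0 := by
  rw [← intervalIntegral.integral_add (hu.2.2.mul hv.bm).ii (hu.bm.mul hv.2.2).ii]
  exact MeasureTheory.integral_eq_of_hasDerivAt_off_countable_of_le (fun x => u x * v x) _ zero_le_one
    (knots_countable m)
    (hu.1.mul hv.1).continuousOn (fun x hx => (hu.2.1 x hx.2).hasDerivAt.mul (hv.2.1 x hx.2).hasDerivAt)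
    ((hu.2.2.mul hv.bm).add (hu.bm.mul hv.2.2)).ii

lemma knot_bds {m j : ℕ} (hj : j < m) : 0 ≤ (j : ℝ) / m ∧ ((j : ℝ) + 1) / m ≤ 1 := by
  have hm' : (0 : ℝ) < m := by exact_mod_cast (by omega : 0 < m)
  have h2 : (j : ℝ) + 1 ≤ m := by exact_mod_cast hj
  exact ⟨by positivity, by rw [div_le_one hm']; exact h2⟩

lemma BM.split {m : ℕ} (hm : 1 ≤ m) {f : ℝ → ℝ} (hf : BM m f) :
    (∫ x in (0 : ℝ)..1, f x) = ∑ j ∈ Finset.range m, ∫ x in ((j : ℝ) / m)..(((j : ℝ) + 1) / m), f x := by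
  have hm' : (m : ℝ) ≠ 0 := by exact_mod_cast (by omega : m ≠ 0)
  have := intervalIntegral.sum_integral_adjacent_intervals (f := f) (μ := volume)
    (a := fun j : ℕ => (j : ℝ) / m) (n := m) (fun k hk => by
      have h := hf.intervalIntegrable (knot_bds hk).1 (knot_lt hm k).le (knot_bds hk).2
      simpa using h)
  simp only [Nat.cast_add, Nat.cast_one, Nat.cast_zero, zero_div, div_self hm'] at this
  exact this.symm

lemma BM.mono_pieces {m : ℕ} (hm : 1 ≤ m) {f g : ℝ → ℝ} (hf : BM m f) (hg : BM m g)
    (h : ∀ j < m, (∫ x in ((j : ℝ) / m)..(((j : ℝ) + 1) / m), f x) ≤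
      ∫ x in ((j : ℝ) / m)..(((j : ℝ) + 1) / m), g x) :
    (∫ x in (0 : ℝ)..1, f x) ≤ ∫ x in (0 : ℝ)..1, g x := by
  rw [hf.split hm, hg.split hm]
  exact Finset.sum_le_sum fun j hj => h j (Finset.mem_range.1 hj)

lemma linear_sq_int (k s M a b : ℝ) (hM : M = (a + b) / 2) :
    (∫ x in a..b, (k + s * (x - M)) ^ 2) = k ^ 2 * (b - a) + s ^ 2 * (b - a) ^ 3 / 12 := by
  have h : ∀ x ∈ uIcc a b, HasDerivAt (fun x => k ^ 2 * x + k * s * (x - M) ^ 2 + s ^ 2 / 3 * (x - M) ^ 3)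
      ((k + s * (x - M)) ^ 2) x := by
    intro x _
    have h1 : HasDerivAt (fun x : ℝ => x - M) 1 x := (hasDerivAt_id x).sub_const M
    have := (((hasDerivAt_id x).const_mul (k ^ 2)).add ((h1.pow 2).const_mul (k * s))).add
      ((h1.pow 3).const_mul (s ^ 2 / 3))
    refine HasDerivAt.congr_deriv this ?_
    simp
    ring
  rw [intervalIntegral.integral_eq_sub_of_hasDerivAt h (by
    apply Continuous.intervalIntegrable; fun_prop), hM]
  ring

lemma IsSpline.inverse_one {m : ℕ} (hm : 1 ≤ m) {u : ℝ → ℝ} (h : IsSpline m 1 u) :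
    (∫ x in (0 : ℝ)..1, deriv u x ^ 2) ≤ 12 * (m : ℝ) ^ 2 * ∫ x in (0 : ℝ)..1, u x ^ 2 := by
  have hW := h.W hm
  have hm' : (0 : ℝ) < m := by exact_mod_cast (by omega : 0 < m)
  rw [← intervalIntegral.integral_const_mul]
  refine BM.mono_pieces hm hW.2.2.sq (hW.bm.sq.const_mul _) fun j hj => ?_
  obtain ⟨q, hd, hq⟩ := h.2 j hj
  set a := (j : ℝ) / m
  set b := ((j : ℝ) + 1) / m with hb
  have hab : a ≤ b := (knot_lt hm j).le
  have hba : b - a = 1 / m := by simp only [a, b]; ring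
  obtain ⟨s, c, rfl⟩ := Polynomial.exists_eq_X_add_C_of_natDegree_le_one hd
  have h1 : (∫ x in a..b, deriv u x ^ 2) = s ^ 2 * (b - a) := by
    rw [interval_congr (m := m) (g := fun _ => s ^ 2) hab]
    · simp; ring
    · intro x hx hk
      have hxp := Icc_subset_pieceSet hj ⟨hx.1.le, hx.2⟩
      have h1 : u =ᶠ[nhds x] fun x => (Polynomial.C s * Polynomial.X + Polynomial.C c).eval x :=
        Filter.mem_of_superset (piece_nhds hj hxp hk) hq
      rw [h1.deriv_eq, Polynomial.deriv]
      simp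
  have h2 : (∫ x in a..b, 12 * (m : ℝ) ^ 2 * u x ^ 2) =
      12 * (m : ℝ) ^ 2 * ((c + s * ((a + b) / 2)) ^ 2 * (b - a) + s ^ 2 * (b - a) ^ 3 / 12) := by
    rw [intervalIntegral.integral_const_mul, ← linear_sq_int _ _ _ _ _ rfl]
    congr 1
    apply intervalIntegral.integral_congr
    intro x hx
    rw [uIcc_of_le hab] at hx
    simp only [hq x (Icc_subset_pieceSet hj hx)]
    simp
    ring
  rw [h1, h2, hba]
  have e : 12 * (m : ℝ) ^ 2 * (s ^ 2 * (1 / (m : ℝ)) ^ 3 / 12) = s ^ 2 * (1 / m) := by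
    field_simp
  have : 0 ≤ 12 * (m : ℝ) ^ 2 * ((c + s * ((a + b) / 2)) ^ 2 * (1 / m)) := by positivity
  nlinarith

lemma sq_trick {A B : ℝ} (hA : 0 ≤ A) (hB : 0 ≤ B) (h : A ^ 2 ≤ B * A) : A ≤ B := by
  rcases hA.eq_or_lt with h0 | h0
  · rw [← h0]; exact hB
  · nlinarith

lemma Sp.inverse {m p : ℕ} (hm : 1 ≤ m) (hp : 1 ≤ p) : ∀ b < 2, ∀ u : ℝ → ℝ, Sp b m p u →
    (∫ x in (0 : ℝ)..1, deriv u x ^ 2) ≤ 12 * (m : ℝ) ^ 2 * ∫ x in (0 : ℝ)..1, u x ^ 2 := by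
  induction p, hp using Nat.le_induction with
  | base => intro b _ u h; exact h.1.inverse_one hm
  | succ p hp ih =>
    intro b hb u h
    have hg := h.derivS hb hm hp
    have hWu := h.1.W hm
    have hWg := hg.1.W hm
    have i1 := ih (1 - b) (by omega) _ hg
    have hibp := hWu.ibp hWg
    have hbd : u 1 * deriv u 1 - u 0 * deriv u 0 = 0 := by
      rcases (by omega : b = 0 ∨ b = 1) with rfl | rfl
      · have := h.2 0 (by omega) rfl
        simp only [iteratedDeriv_zero] at this
        simp [this]
      · have := h.2 1 (by omega) rfl
        simp only [iteratedDeriv_one] at this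
        simp [this]
    have hcs := BM.cs hWu.bm hWg.2.2 le_rfl zero_le_one le_rfl
    have e1 : (∫ x in (0 : ℝ)..1, deriv u x * deriv u x) = ∫ x in (0 : ℝ)..1, deriv u x ^ 2 := by
      simp only [pow_two]
    rw [hbd, e1] at hibp
    have n0 : 0 ≤ ∫ x in (0 : ℝ)..1, u x ^ 2 := intervalIntegral.integral_nonneg zero_le_one fun x _ => sq_nonneg _
    have n1 : 0 ≤ ∫ x in (0 : ℝ)..1, deriv u x ^ 2 :=
      intervalIntegral.integral_nonneg zero_le_one fun x _ => sq_nonneg _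
    apply sq_trick n1 (by positivity)
    have e2 : (∫ x in (0 : ℝ)..1, deriv u x ^ 2) = - ∫ x in (0 : ℝ)..1, u x * deriv (deriv u) x := by linarith
    calc (∫ x in (0 : ℝ)..1, deriv u x ^ 2) ^ 2 = (∫ x in (0 : ℝ)..1, u x * deriv (deriv u) x) ^ 2 := by
          rw [e2]; ring
      _ ≤ _ := hcs
      _ ≤ (∫ x in (0 : ℝ)..1, u x ^ 2) * (12 * (m : ℝ) ^ 2 * ∫ x in (0 : ℝ)..1, deriv u x ^ 2) := by gcongr
      _ = _ := by ring

end SplineMG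

namespace SplineMG

lemma exists_interp {m : ℕ} (hm : 1 ≤ m) (u : ℝ → ℝ) : ∃ w : ℝ → ℝ, IsSpline m 1 w ∧
    ∀ j < m, ∀ x ∈ pieceSet m j, w x = u ((j : ℝ) / m) +
      m * (u (((j : ℝ) + 1) / m) - u ((j : ℝ) / m)) * (x - (j : ℝ) / m) := by
  have hm' : (0 : ℝ) < m := by exact_mod_cast (by omega : 0 < m)
  let l : ℕ → ℝ → ℝ := fun j x => u ((j : ℝ) / m) +
      m * (u (((j : ℝ) + 1) / m) - u ((j : ℝ) / m)) * (x - (j : ℝ) / m)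
  have hnode : ∀ j : ℕ, l j (((j : ℝ) + 1) / m) = l (j + 1) (((j : ℝ) + 1) / m) := by
    intro j
    simp only [l]
    push_cast
    field_simp
    ring
  -- consistency
  have hcons : ∀ i j x, i < j → j < m → x ∈ pieceSet m i → x ∈ pieceSet m j → l i x = l j x := by
    intro i j x hij hj hi hxj
    rw [mem_pieceSet (by omega)] at hi hxj
    have h1 : (j : ℝ) / m ≤ x := by rcases hxj.1 with h | h; · omega
                                    · exact h
    have h2 : x ≤ ((i : ℝ) + 1) / m := by rcases hi.2 with h | h; · omega
                                          · exact h
    have h3 := h1.trans h2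
    rw [div_le_div_iff_of_pos_right hm'] at h3
    have h4 : j ≤ i + 1 := by exact_mod_cast h3
    have h5 : j = i + 1 := by omega
    subst h5
    have : x = ((i : ℝ) + 1) / m := le_antisymm h2 (by push_cast at h1; exact h1)
    rw [this]; exact hnode i
  have hw : ∀ j < m, ∀ x ∈ pieceSet m j, l (idx m x) x = l j x := by
    intro j hj x hx
    rcases lt_trichotomy (idx m x) j with h | h | h
    · exact hcons _ _ x h hj (mem_idx hm x) hx
    · rw [h]
    · exact (hcons _ _ x h (idx_lt hm x) hx (mem_idx hm x)).symm
  have hpoly : ∀ j < m, ∃ q : Polynomial ℝ, q.natDegree ≤ 1 ∧ ∀ x ∈ pieceSet m j, l (idx m x) x = q.eval x := by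
    intro j hj
    refine ⟨Polynomial.C (m * (u (((j : ℝ) + 1) / m) - u ((j : ℝ) / m))) * Polynomial.X +
      Polynomial.C (u ((j : ℝ) / m) - m * (u (((j : ℝ) + 1) / m) - u ((j : ℝ) / m)) * ((j : ℝ) / m)),
      Polynomial.natDegree_linear_le, fun x hx => ?_⟩
    rw [hw j hj x hx]
    simp [l]
    ring
  refine ⟨fun x => l (idx m x) x, ⟨?_, hpoly⟩, fun j hj x hx => hw j hj x hx⟩
  have hc := continuous_of_pieces hm (u := fun x => l (idx m x) x) (fun j hj => by
    obtain ⟨q, _, h⟩ := hpoly j hj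
    exact ⟨q, h⟩)
  simpa using hc.continuousOn

lemma W.poincare {m : ℕ} {e : ℝ → ℝ} (he : W m e) {a b : ℝ} (ha : 0 ≤ a) (hab : a ≤ b) (hb : b ≤ 1)
    (h0 : e a = 0) : (∫ x in a..b, e x ^ 2) ≤ (b - a) ^ 2 * ∫ x in a..b, deriv e x ^ 2 := by
  set D := ∫ x in a..b, deriv e x ^ 2
  have h1 : ∀ x ∈ Icc a b, e x ^ 2 ≤ (b - a) * D := by
    intro x hx
    have f := he.ftc ha hx.1 (hx.2.trans hb)
    rw [h0, sub_zero] at f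
    have cs := BM.cs (BM.const (m := m) 1) he.2.2 ha hx.1 (hx.2.trans hb)
    simp only [one_mul, one_pow, intervalIntegral.integral_const, smul_eq_mul, mul_one] at cs
    rw [f] at cs
    have mono : (∫ y in a..x, deriv e y ^ 2) ≤ D :=
      intervalIntegral.integral_mono_interval le_rfl hx.1 hx.2
        (Filter.Eventually.of_forall fun y => sq_nonneg _) (he.2.2.sq.intervalIntegrable ha hab hb)
    have n : 0 ≤ ∫ y in a..x, deriv e y ^ 2 := intervalIntegral.integral_nonneg hx.1 fun y _ => sq_nonneg _
    have := hx.2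
    have := hx.1
    calc _ ≤ _ := cs
      _ ≤ (b - a) * D := by
        apply mul_le_mul _ mono n <;> linarith
  calc (∫ x in a..b, e x ^ 2) ≤ ∫ x in a..b, (b - a) * D :=
        intervalIntegral.integral_mono_on hab (he.bm.sq.intervalIntegrable ha hab hb) (by simp) h1
    _ = _ := by simp; ring

lemma W.interp_piece {m : ℕ} {u w : ℝ → ℝ} (hu : W m u) (hw : W m w) {a b s : ℝ} (ha : 0 ≤ a)
    (hab : a < b) (hb : b ≤ 1) (hua : w a = u a) (hub : w b = u b)
    (hs : ∀ x ∈ Ioc a b, x ∉ knots m → deriv w x = s) :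
    (∫ x in a..b, deriv w x ^ 2) ≤ (∫ x in a..b, deriv u x ^ 2) ∧
    (∫ x in a..b, (u x - w x) ^ 2) ≤ (b - a) ^ 2 * ∫ x in a..b, deriv u x ^ 2 := by
  have he := hu.sub hw
  have hpo := he.poincare ha hab.le hb (by simp [hua])
  have hftc := he.ftc ha hab.le hb
  simp only [hua, hub, sub_self] at hftc
  have h1 : (∫ x in a..b, deriv w x ^ 2) = s ^ 2 * (b - a) := by
    rw [interval_congr (m := m) (g := fun _ => s ^ 2) hab.le (fun x hx hk => by rw [hs x hx hk])]
    simp; ring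
  have h2 : (∫ x in a..b, deriv u x ^ 2) = (∫ x in a..b, deriv (fun x => u x - w x) x ^ 2) + s ^ 2 * (b - a) := by
    rw [interval_congr (m := m) (g := fun x => (deriv (fun x => u x - w x) x ^ 2 +
      2 * s * deriv (fun x => u x - w x) x) + s ^ 2) hab.le (fun x hx hk => by
        rw [hu.deriv_sub hw hk, hs x hx hk]; ring)]
    rw [intervalIntegral.integral_add, intervalIntegral.integral_add, intervalIntegral.integral_const_mul, hftc]
    · simp; ring
    · exact he.2.2.sq.intervalIntegrable ha hab.le hb
    · exact (he.2.2.const_mul _).intervalIntegrable ha hab.le hb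
    · exact (he.2.2.sq.add (he.2.2.const_mul _)).intervalIntegrable ha hab.le hb
    · simp
  have n : 0 ≤ ∫ x in a..b, deriv (fun x => u x - w x) x ^ 2 :=
    intervalIntegral.integral_nonneg hab.le fun y _ => sq_nonneg _
  have n2 : 0 ≤ s ^ 2 * (b - a) := mul_nonneg (sq_nonneg _) (by linarith)
  refine ⟨by linarith, hpo.trans ?_⟩
  apply mul_le_mul_of_nonneg_left _ (sq_nonneg _)
  linarith

lemma approx_one {m : ℕ} (hm : 1 ≤ m) {b : ℕ} {u : ℝ → ℝ} (hu : W m u) (h0 : b = 0 → u 0 = 0 ∧ u 1 = 0) :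
    ∃ w, Sp b m 1 w ∧ (∫ x in (0 : ℝ)..1, deriv w x ^ 2) ≤ (∫ x in (0 : ℝ)..1, deriv u x ^ 2) ∧
      (∫ x in (0 : ℝ)..1, (u x - w x) ^ 2) ≤ (1 / (m : ℝ)) ^ 2 * ∫ x in (0 : ℝ)..1, deriv u x ^ 2 := by
  obtain ⟨w, hw, hl⟩ := exists_interp hm u
  have hm' : (0 : ℝ) < m := by exact_mod_cast (by omega : 0 < m)
  have hW := hw.W hm
  have hleft : ∀ j < m, w ((j : ℝ) / m) = u ((j : ℝ) / m) := by
    intro j hj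
    rw [hl j hj _ (Icc_subset_pieceSet hj ⟨le_rfl, (knot_lt hm j).le⟩)]
    simp
  have hright : ∀ j < m, w (((j : ℝ) + 1) / m) = u (((j : ℝ) + 1) / m) := by
    intro j hj
    rw [hl j hj _ (Icc_subset_pieceSet hj ⟨(knot_lt hm j).le, le_rfl⟩)]
    field_simp
    ring
  have hp : ∀ j < m, _ := fun j hj => hu.interp_piece hW (s := m * (u (((j : ℝ) + 1) / m) - u ((j : ℝ) / m)))
    (knot_bds hj).1 (knot_lt hm j) (knot_bds hj).2
    (hleft j hj) (hright j hj) (fun x hx hk => by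
      have hxp := Icc_subset_pieceSet hj ⟨hx.1.le, hx.2⟩
      have h1 : w =ᶠ[nhds x] fun x => u ((j : ℝ) / m) +
          m * (u (((j : ℝ) + 1) / m) - u ((j : ℝ) / m)) * (x - (j : ℝ) / m) :=
        Filter.mem_of_superset (piece_nhds hj hxp hk) (hl j hj)
      rw [h1.deriv_eq]
      simp)
  refine ⟨w, ⟨hw, ?_⟩, ?_, ?_⟩
  · intro k hk hkb
    obtain rfl : k = 0 := by omega
    have hb := h0 (by omega)
    simp only [iteratedDeriv_zero]
    have e1 := hleft 0 (by omega)
    have e2 := hright (m - 1) (by omega)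
    have e3 : (((m - 1 : ℕ) : ℝ) + 1) / m = 1 := by
      have : ((m - 1 : ℕ) : ℝ) + 1 = m := by exact_mod_cast (by omega : m - 1 + 1 = m)
      rw [this]; field_simp
    rw [e3] at e2
    simp only [Nat.cast_zero, zero_div] at e1
    rw [e1, e2]; exact hb
  · exact BM.mono_pieces hm hW.2.2.sq hu.2.2.sq (fun j hj => (hp j hj).1)
  · rw [← intervalIntegral.integral_const_mul]
    refine BM.mono_pieces hm (hu.bm.sub hW.bm).sq (hu.2.2.sq.const_mul _) (fun j hj => ?_)
    rw [intervalIntegral.integral_const_mul]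
    have := (hp j hj).2
    have e : ((j : ℝ) + 1) / m - (j : ℝ) / m = 1 / m := by ring
    rwa [e] at this

lemma exists_proj {m p : ℕ} (hm : 1 ≤ m) (V : Submodule ℝ (ℝ → ℝ)) (hV : V ≤ SplS m p) {g : ℝ → ℝ}
    (hg : BM m g) : ∃ q ∈ V, ∀ z ∈ V, (∫ x in (0 : ℝ)..1, (g x - q x) * z x) = 0 := by
  obtain ⟨n, e, heV, hon, hsp⟩ := exists_onb hm V hV
  have hec : ∀ i, BM m (e i) := fun i => BM.of_cont ((hV (heV i)).continuous hm)
  let q : ℝ → ℝ := ∑ i, (∫ x in (0 : ℝ)..1, g x * e i x) • e i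
  have hq : q ∈ V := Submodule.sum_mem _ fun i _ => Submodule.smul_mem _ _ (heV i)
  have hqb : BM m q := BM.of_cont ((hV hq).continuous hm)
  have key : ∀ j, (∫ x in (0 : ℝ)..1, (g x - q x) * e j x) = 0 := by
    intro j
    simp only [sub_mul]
    rw [intervalIntegral.integral_sub (hg.mul (hec j)).ii (hqb.mul (hec j)).ii]
    have : (∫ x in (0 : ℝ)..1, q x * e j x) = ∫ x in (0 : ℝ)..1, g x * e j x := by
      simp only [q, Finset.sum_apply, Pi.smul_apply, smul_eq_mul, Finset.sum_mul, mul_assoc]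
      rw [intervalIntegral.integral_finsetSum (fun i _ => (((hec i).mul (hec j)).const_mul _).ii)]
      simp only [intervalIntegral.integral_const_mul, ← ip0_eq (e _) (e j), hon]
      simp
    rw [this, sub_self]
  refine ⟨q, hq, fun z hz => ?_⟩
  obtain ⟨y, rfl⟩ := hsp z hz
  simp only [Finset.sum_apply, Pi.smul_apply, smul_eq_mul, Finset.mul_sum]
  rw [intervalIntegral.integral_finsetSum (fun i _ => ((hg.sub hqb).mul ((hec i).const_mul _)).ii)]
  refine Finset.sum_eq_zero fun i _ => ?_
  have : ∀ x, (g x - q x) * (y i * e i x) = y i * ((g x - q x) * e i x) := fun x => by ring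
  simp only [this, intervalIntegral.integral_const_mul, key, mul_zero]

lemma const_mem {m p : ℕ} (hp : 1 ≤ p) (c : ℝ) : Sp 1 m p (fun _ => c) := by
  refine ⟨⟨contDiffOn_const, fun j _ => ⟨Polynomial.C c, by simp, fun x _ => by simp⟩⟩, fun k hk hk2 => ?_⟩
  have : k ≠ 0 := by omega
  simp [iteratedDeriv_const, this]

lemma approx {m p : ℕ} (hm : 1 ≤ m) (hp : 1 ≤ p) : ∀ b < 2, ∀ u : ℝ → ℝ, W m u →
    (b = 0 → u 0 = 0 ∧ u 1 = 0) →
    ∃ w, Sp b m p w ∧ (∫ x in (0 : ℝ)..1, deriv w x ^ 2) ≤ (∫ x in (0 : ℝ)..1, deriv u x ^ 2) ∧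
      (∫ x in (0 : ℝ)..1, (u x - w x) ^ 2) ≤ (1 / (m : ℝ)) ^ 2 * ∫ x in (0 : ℝ)..1, deriv u x ^ 2 := by
  induction p, hp using Nat.le_induction with
  | base => intro b _ u hu h0; exact approx_one hm hu h0
  | succ p hp ih =>
    intro b hb u hu h0
    obtain ⟨q, hqV, horth⟩ := exists_proj hm (SpS (1 - b) m p hm) (SpS_le hm) hu.2.2
    have hqS : Sp (1 - b) m p q := hqV
    have hqc : Continuous q := hqS.1.continuous hm
    have hqb : BM m q := BM.of_cont hqc
    set g := deriv u with hg
    have hgb : BM m g := hu.2.2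
    -- the constant
    obtain ⟨c, hc0, hc1⟩ : ∃ c : ℝ, (b = 0 → c = 0) ∧
        (b = 1 → (∫ x in (0 : ℝ)..1, (u x - (c + ∫ t in (0 : ℝ)..x, q t))) = 0) := by
      rcases (by omega : b = 0 ∨ b = 1) with rfl | rfl
      · exact ⟨0, fun _ => rfl, fun h => by omega⟩
      · have hcc : Continuous (fun x => u x - (0 + ∫ t in (0 : ℝ)..x, q t)) :=
          hu.1.sub (continuous_iff_continuousAt.2 fun x => (hasDerivAt_anti hqc 0 x).continuousAt)
        refine ⟨∫ x in (0 : ℝ)..1, (u x - (0 + ∫ t in (0 : ℝ)..x, q t)), fun h => by omega, fun _ => ?_⟩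
        set c := ∫ x in (0 : ℝ)..1, (u x - (0 + ∫ t in (0 : ℝ)..x, q t)) with hc
        have : ∀ x, u x - (c + ∫ t in (0 : ℝ)..x, q t) = (u x - (0 + ∫ t in (0 : ℝ)..x, q t)) - c := by
          intro x; ring
        simp only [this]
        rw [intervalIntegral.integral_sub (hcc.intervalIntegrable _ _) (by simp), ← hc]
        simp
    set w : ℝ → ℝ := fun x => c + ∫ t in (0 : ℝ)..x, q t with hwdef
    have hwd : ∀ x, HasDerivAt w (q x) x := hasDerivAt_anti hqc c
    have hwderiv : deriv w = q := funext fun x => (hwd x).deriv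
    have hwW : W m w := W.of_hasDeriv hqc hwd
    have hw0 : b = 0 → c = 0 ∧ c + ∫ t in (0 : ℝ)..1, q t = 0 := by
      intro hb0
      refine ⟨hc0 hb0, ?_⟩
      subst hb0
      rw [hc0 rfl, zero_add]
      have h1 := horth (fun _ => 1) (const_mem hp 1)
      simp only [mul_one] at h1
      rw [intervalIntegral.integral_sub hgb.ii hqb.ii, hu.ftc le_rfl zero_le_one le_rfl, (h0 rfl).1, (h0 rfl).2] at h1
      linarith
    have hwS : Sp b m (p + 1) w := hqS.anti hb hm hp c hw0
    -- Pythagoras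
    have horthq := horth q hqV
    have hpy : (∫ x in (0 : ℝ)..1, g x ^ 2) = (∫ x in (0 : ℝ)..1, (g x - q x) ^ 2) + ∫ x in (0 : ℝ)..1, q x ^ 2 := by
      have e : ∀ x, g x ^ 2 = ((g x - q x) ^ 2 + 2 * ((g x - q x) * q x)) + q x ^ 2 := fun x => by ring
      rw [intervalIntegral.integral_congr (fun x _ => e x), intervalIntegral.integral_add,
        intervalIntegral.integral_add, intervalIntegral.integral_const_mul, horthq]
      · ring
      · exact (hgb.sub hqb).sq.ii
      · exact (((hgb.sub hqb).mul hqb).const_mul _).ii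
      · exact ((hgb.sub hqb).sq.add (((hgb.sub hqb).mul hqb).const_mul _)).ii
      · exact hqb.sq.ii
    have n1 : 0 ≤ ∫ x in (0 : ℝ)..1, (g x - q x) ^ 2 :=
      intervalIntegral.integral_nonneg zero_le_one fun x _ => sq_nonneg _
    have n2 : 0 ≤ ∫ x in (0 : ℝ)..1, q x ^ 2 :=
      intervalIntegral.integral_nonneg zero_le_one fun x _ => sq_nonneg _
    refine ⟨w, hwS, by rw [hwderiv]; linarith, ?_⟩
    have heW := hu.sub hwW
    set e : ℝ → ℝ := fun x => u x - w x with hedef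
    have n3 : 0 ≤ ∫ x in (0 : ℝ)..1, e x ^ 2 :=
      intervalIntegral.integral_nonneg zero_le_one fun x _ => sq_nonneg _
    suffices h : (∫ x in (0 : ℝ)..1, e x ^ 2) ≤ (1 / (m : ℝ)) ^ 2 * ∫ x in (0 : ℝ)..1, (g x - q x) ^ 2 by
      refine h.trans (mul_le_mul_of_nonneg_left ?_ (sq_nonneg _))
      linarith
    set φ : ℝ → ℝ := fun x => 0 + ∫ t in (0 : ℝ)..x, e t with hφ
    have hφd : ∀ x, HasDerivAt φ (e x) x := hasDerivAt_anti heW.1 0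
    have hφderiv : deriv φ = e := funext fun x => (hφd x).deriv
    have hφW : W m φ := W.of_hasDeriv heW.1 hφd
    have hφ0 : φ 0 = 0 := by simp [hφ]
    have hφ1 : b = 1 → φ 1 = 0 := fun h => by
      simp only [hφ, zero_add]
      exact hc1 h
    obtain ⟨ψ, hψS, _, hψ⟩ := ih (1 - b) (by omega) φ hφW (fun h => ⟨hφ0, hφ1 (by omega)⟩)
    have hψb : BM m ψ := BM.of_cont (hψS.1.continuous hm)
    have hibp := heW.ibp hφW
    have hbd : e 1 * φ 1 - e 0 * φ 0 = 0 := by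
      rcases (by omega : b = 0 ∨ b = 1) with hb0 | hb1
      · have e1 : e 1 = 0 := by
          simp only [hedef, hwdef, (h0 hb0).2, (hw0 hb0).2]; simp
        rw [e1, hφ0]; simp
      · rw [hφ1 hb1, hφ0]; simp
    rw [hbd, hφderiv] at hibp
    have h1 : (∫ x in (0 : ℝ)..1, deriv e x * φ x) = ∫ x in (0 : ℝ)..1, (g x - q x) * (φ x - ψ x) := by
      rw [interval_congr (m := m) (g := fun x => (g x - q x) * (φ x - ψ x) + (g x - q x) * ψ x) zero_le_one
        (fun x _ hk => by rw [hedef, hu.deriv_sub hwW hk, hwderiv]; ring)]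
      rw [intervalIntegral.integral_add ((hgb.sub hqb).mul (hφW.bm.sub hψb)).ii ((hgb.sub hqb).mul hψb).ii,
        horth ψ hψS, add_zero]
    have hcs := BM.cs (hgb.sub hqb) (hφW.bm.sub hψb) le_rfl zero_le_one le_rfl
    rw [hφderiv] at hψ
    have e3 : (∫ x in (0 : ℝ)..1, e x * e x) = ∫ x in (0 : ℝ)..1, e x ^ 2 := by simp only [pow_two]
    rw [e3, h1] at hibp
    apply sq_trick n3 (by positivity)
    have e2 : (∫ x in (0 : ℝ)..1, e x ^ 2) = - ∫ x in (0 : ℝ)..1, (g x - q x) * (φ x - ψ x) := by linarith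
    calc (∫ x in (0 : ℝ)..1, e x ^ 2) ^ 2 = (∫ x in (0 : ℝ)..1, (g x - q x) * (φ x - ψ x)) ^ 2 := by
          rw [e2]; ring
      _ ≤ _ := hcs
      _ ≤ (∫ x in (0 : ℝ)..1, (g x - q x) ^ 2) * ((1 / (m : ℝ)) ^ 2 * ∫ x in (0 : ℝ)..1, e x ^ 2) := by gcongr
      _ = _ := by ring

lemma int_sq_add_le {m : ℕ} {f g k : ℝ → ℝ} (hf : BM m f) (hg : BM m g)
    (h : ∀ x ∉ knots m, k x = f x + g x) :
    (∫ x in (0 : ℝ)..1, k x ^ 2) ≤ 2 * (∫ x in (0 : ℝ)..1, f x ^ 2) + 2 * ∫ x in (0 : ℝ)..1, g x ^ 2 := by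
  rw [interval_congr (m := m) (g := fun x => (f x + g x) ^ 2) zero_le_one (fun x _ hk => by rw [h x hk]),
    ← intervalIntegral.integral_const_mul, ← intervalIntegral.integral_const_mul,
    ← intervalIntegral.integral_add (hf.sq.const_mul 2).ii (hg.sq.const_mul 2).ii]
  exact intervalIntegral.integral_mono_on zero_le_one (hf.add hg).sq.ii
    ((hf.sq.const_mul 2).add (hg.sq.const_mul 2)).ii (fun x _ => by nlinarith [sq_nonneg (f x - g x)])

lemma stable_1d {m p : ℕ} (hm : 1 ≤ m) (hp : 1 ≤ p) {u0 u1 : ℝ → ℝ} (h0 : IsSpline0 m p u0)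
    (h1 : IsSpline1 m p u1) :
    h1semiSq u0 ≤ 54 * h1semiSq (fun x => u0 x + u1 x) ∧ h1semiSq u1 ≤ 54 * h1semiSq (fun x => u0 x + u1 x) := by
  simp only [h1semiSq, Ioo_eq]
  have hu : IsSpline m p (fun x => u0 x + u1 x) := (SplS m p).add_mem h0.1 h1.1
  set u : ℝ → ℝ := fun x => u0 x + u1 x with hudef
  have hm' : (0 : ℝ) < m := by exact_mod_cast (by omega : 0 < m)
  have hW0 := h0.1.W hm
  have hW1 := h1.1.W hm
  have hWu := hu.W hm
  obtain ⟨w, hw, hw1, hw2⟩ := approx hm hp 1 (by omega) u hWu (by omega)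
  have hWw := hw.1.W hm
  have hS0 : Sp 1 m p u0 := isSpline0_iff.1 h0
  have hz : Sp 1 m p (fun x => u0 x - w x) := (SpS 1 m p hm).sub_mem hS0 hw
  have hWz := hW0.sub hWw
  set z : ℝ → ℝ := fun x => u0 x - w x with hzdef
  have hinv := Sp.inverse hm hp 1 (by omega) z hz
  have horth := h1.2 z (isSpline0_iff.2 hz)
  rw [ip0_eq] at horth
  have hpy : (∫ x in (0 : ℝ)..1, (u x - w x) ^ 2) = ((∫ x in (0 : ℝ)..1, u1 x ^ 2) + ∫ x in (0 : ℝ)..1, z x ^ 2) := by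
    have e : ∀ x, (u x - w x) ^ 2 = (u1 x ^ 2 + 2 * (u1 x * z x)) + z x ^ 2 := fun x => by
      simp only [hudef, hzdef]; ring
    rw [intervalIntegral.integral_congr (fun x _ => e x), intervalIntegral.integral_add,
        intervalIntegral.integral_add, intervalIntegral.integral_const_mul, horth]
    · ring
    · exact hW1.bm.sq.ii
    · exact ((hW1.bm.mul hWz.bm).const_mul _).ii
    · exact (hW1.bm.sq.add ((hW1.bm.mul hWz.bm).const_mul _)).ii
    · exact hWz.bm.sq.ii
  have n1 : 0 ≤ ∫ x in (0 : ℝ)..1, u1 x ^ 2 :=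
    intervalIntegral.integral_nonneg zero_le_one fun x _ => sq_nonneg _
  have nu : 0 ≤ ∫ x in (0 : ℝ)..1, deriv u x ^ 2 :=
    intervalIntegral.integral_nonneg zero_le_one fun x _ => sq_nonneg _
  have hz2 : (∫ x in (0 : ℝ)..1, deriv z x ^ 2) ≤ 12 * ∫ x in (0 : ℝ)..1, deriv u x ^ 2 := by
    refine hinv.trans ?_
    have h3 : (∫ x in (0 : ℝ)..1, z x ^ 2) ≤ (1 / (m : ℝ)) ^ 2 * ∫ x in (0 : ℝ)..1, deriv u x ^ 2 := by linarith
    calc _ ≤ 12 * (m : ℝ) ^ 2 * ((1 / (m : ℝ)) ^ 2 * ∫ x in (0 : ℝ)..1, deriv u x ^ 2) := by gcongr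
      _ = _ := by field_simp
  have hA : (∫ x in (0 : ℝ)..1, deriv u0 x ^ 2) ≤ 26 * ∫ x in (0 : ℝ)..1, deriv u x ^ 2 := by
    have := int_sq_add_le (k := deriv u0) hWw.2.2 hWz.2.2 (fun x hk => by
      rw [hzdef, hW0.deriv_sub hWw hk]; ring)
    linarith
  have hB : (∫ x in (0 : ℝ)..1, deriv u1 x ^ 2) ≤ 54 * ∫ x in (0 : ℝ)..1, deriv u x ^ 2 := by
    have := int_sq_add_le (k := deriv u1) hWu.2.2 (hW0.2.2.const_mul (-1)) (fun x hk => by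
      rw [hudef, deriv_fun_add (hW0.2.1 x hk) (hW1.2.1 x hk)]; ring)
    have e : ∀ x, (-1 * deriv u0 x) ^ 2 = deriv u0 x ^ 2 := fun x => by ring
    simp only [e] at this
    linarith
  exact ⟨by linarith, hB⟩

end SplineMG

namespace SplineMG

lemma ip0_smul_add_left {m : ℕ} {u v w : ℝ → ℝ} (hu : BM m u) (hv : BM m v) (hw : BM m w) :
    ip0 (u + v) w = ip0 u w + ip0 v w := by
  simp only [ip0_eq, Pi.add_apply, add_mul]
  exact intervalIntegral.integral_add (hu.mul hw).ii (hv.mul hw).ii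

def S1 (m p : ℕ) (hm : 1 ≤ m) : Submodule ℝ (ℝ → ℝ) where
  carrier := {u | IsSpline1 m p u}
  zero_mem' := ⟨(SplS m p).zero_mem, fun v _ => by simp [ip0]⟩
  add_mem' := by
    rintro u v ⟨hu, hu'⟩ ⟨hv, hv'⟩
    refine ⟨(SplS m p).add_mem hu hv, fun w hw => ?_⟩
    rw [ip0_add (hu.continuous hm) (hv.continuous hm) (hw.1.continuous hm), hu' w hw, hv' w hw, add_zero]
  smul_mem' := by
    rintro c u ⟨hu, hu'⟩
    refine ⟨(SplS m p).smul_mem c hu, fun w hw => ?_⟩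
    rw [ip0_smul, hu' w hw, mul_zero]

lemma exists_basis {m : ℕ} (p : ℕ) (hm : 1 ≤ m) : ∃ (n0 n1 : ℕ) (e : Fin n0 ⊕ Fin n1 → ℝ → ℝ),
    (∀ k, IsSplineC m p k.isRight (e k)) ∧ (∀ k l, ip0 (e k) (e l) = if k = l then 1 else 0) ∧
    (∀ b u, IsSplineC m p b u → ∃ y : Fin n0 ⊕ Fin n1 → ℝ, (∀ k, k.isRight ≠ b → y k = 0) ∧ u = ∑ k, y k • e k) ∧
    (∀ u, IsSpline m p u → ∃ y : Fin n0 ⊕ Fin n1 → ℝ, u = ∑ k, y k • e k) := by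
  obtain ⟨n0, e0, hV0, ho0, hs0⟩ := exists_onb hm (SpS 1 m p hm) (SpS_le hm)
  obtain ⟨n1, e1, hV1, ho1, hs1⟩ := exists_onb (p := p) hm (S1 m p hm) (fun u hu => hu.1)
  have h0 : ∀ i, IsSpline0 m p (e0 i) := fun i => isSpline0_iff.2 (hV0 i)
  have h1 : ∀ i, IsSpline1 m p (e1 i) := fun i => hV1 i
  have hs : ∀ b u, IsSplineC m p b u → ∃ y : Fin n0 ⊕ Fin n1 → ℝ, (∀ k, k.isRight ≠ b → y k = 0) ∧
      u = ∑ k, y k • (Sum.elim e0 e1) k := by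
    rintro (_ | _) u hu
    · obtain ⟨y, hy⟩ := hs0 u (isSpline0_iff.1 hu)
      refine ⟨Sum.elim y 0, ?_, ?_⟩
      · rintro (k | k) hk
        · simp at hk
        · rfl
      · rw [Fintype.sum_sum_type]; simp [hy]
    · obtain ⟨y, hy⟩ := hs1 u hu
      refine ⟨Sum.elim 0 y, ?_, ?_⟩
      · rintro (k | k) hk
        · rfl
        · simp at hk
      · rw [Fintype.sum_sum_type]; simp [hy]
  refine ⟨n0, n1, Sum.elim e0 e1, ?_, ?_, hs, ?_⟩
  · rintro (k | k)
    · exact h0 k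
    · exact h1 k
  · rintro (k | k) (l | l)
    · simp [ho0]
    · simp only [Sum.elim_inl, Sum.elim_inr, reduceCtorEq, if_false]
      rw [ip0_comm]; exact (h1 l).2 _ (h0 k)
    · simp only [Sum.elim_inl, Sum.elim_inr, reduceCtorEq, if_false]
      exact (h1 k).2 _ (h0 l)
    · simp [ho1]
  · intro u hu
    obtain ⟨q, hq, hqo⟩ := exists_proj (p := p) hm (SpS 1 m p hm) (SpS_le hm) (hu.W hm).bm
    obtain ⟨y, _, hy⟩ := hs false q (isSpline0_iff.2 hq)
    obtain ⟨y', _, hy'⟩ := hs true (u - q) ⟨(SplS m p).sub_mem hu (SpS_le hm hq), fun v hv => by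
      rw [ip0_eq]; exact hqo v (isSpline0_iff.1 hv)⟩
    refine ⟨y + y', ?_⟩
    simp only [Pi.add_apply, add_smul, Finset.sum_add_distrib]
    rw [← hy, ← hy']
    simp

section tens

variable {K : Type} [Fintype K] {d : ℕ}

/-- tensor expansion -/
def T (F : Fin d → K → ℝ → ℝ) (c : (Fin d → K) → ℝ) : (Fin d → ℝ) → ℝ :=
  fun x => ∑ κ, c κ * ∏ j, F j (κ j) (x j)

lemma cube_meas (d : ℕ) : (volume : Measure (Fin d → ℝ)).restrict (cube d) =
    Measure.pi (fun _ => volume.restrict (Ioo (0 : ℝ) 1)) := by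
  rw [cube, volume_pi, Measure.restrict_pi_pi]

lemma BM.integrable {m : ℕ} {g : ℝ → ℝ} (hg : BM m g) : Integrable g (volume.restrict (Ioo (0 : ℝ) 1)) := by
  have := hg.ii
  rw [intervalIntegrable_iff_integrableOn_Ioc_of_le zero_le_one] at this
  exact this.mono_set Ioo_subset_Ioc_self

lemma int_prod {m : ℕ} {f : Fin d → ℝ → ℝ} (hf : ∀ j, BM m (f j)) :
    IntegrableOn (fun x : Fin d → ℝ => ∏ j, f j (x j)) (cube d) := by
  rw [IntegrableOn, cube_meas]
  exact Integrable.fintype_prod fun i => (hf i).integrable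

lemma integral_prod' (f : Fin d → ℝ → ℝ) :
    (∫ x in cube d, ∏ j, f j (x j)) = ∏ j, ∫ x in Ioo (0 : ℝ) 1, f j x := by
  rw [cube_meas]
  exact integral_fintype_prod_eq_prod (𝕜 := ℝ) f

lemma T_mul (F G : Fin d → K → ℝ → ℝ) (c c' : (Fin d → K) → ℝ) (x : Fin d → ℝ) :
    T F c x * T G c' x = ∑ κ, ∑ l, c κ * c' l * ∏ j, (F j (κ j) (x j) * G j (l j) (x j)) := by
  unfold T
  rw [Finset.sum_mul_sum]
  refine Finset.sum_congr rfl fun κ _ => Finset.sum_congr rfl fun l _ => ?_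
  rw [Finset.prod_mul_distrib]; ring

lemma T_mul_int {m : ℕ} {F G : Fin d → K → ℝ → ℝ} (hF : ∀ j k, BM m (F j k)) (hG : ∀ j k, BM m (G j k))
    (c c' : (Fin d → K) → ℝ) : IntegrableOn (fun x => T F c x * T G c' x) (cube d) := by
  simp only [T_mul]
  refine integrable_finsetSum _ fun κ _ => integrable_finsetSum _ fun l _ => ?_
  exact (int_prod (f := fun j y => F j (κ j) y * G j (l j) y) (fun j => (hF j _).mul (hG j _))).const_mul _

lemma T_integral {m : ℕ} {F G : Fin d → K → ℝ → ℝ} (hF : ∀ j k, BM m (F j k)) (hG : ∀ j k, BM m (G j k))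
    (c c' : (Fin d → K) → ℝ) : (∫ x in cube d, T F c x * T G c' x) =
      ∑ κ, ∑ l, c κ * c' l * ∏ j, ip0 (F j (κ j)) (G j (l j)) := by
  simp only [T_mul]
  have hi : ∀ κ l : Fin d → K, IntegrableOn (fun x : Fin d → ℝ => c κ * c' l *
      ∏ j, (F j (κ j) (x j) * G j (l j) (x j))) (cube d) := fun κ l =>
    (int_prod (f := fun j y => F j (κ j) y * G j (l j) y) (fun j => (hF j _).mul (hG j _))).const_mul _
  rw [integral_finsetSum _ (fun κ _ => integrable_finsetSum _ fun l _ => hi κ l)]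
  refine Finset.sum_congr rfl fun κ _ => ?_
  rw [integral_finsetSum _ (fun l _ => hi κ l)]
  refine Finset.sum_congr rfl fun l _ => ?_
  rw [integral_const_mul, integral_prod' (fun j y => F j (κ j) y * G j (l j) y)]
  rfl

lemma span_expand (e : K → ℝ → ℝ) (P : Fin d → (ℝ → ℝ) → Prop) (supp : Fin d → K → Prop)
    (h : ∀ i f, P i f → ∃ y : K → ℝ, (∀ k, ¬ supp i k → y k = 0) ∧ f = ∑ k, y k • e k)
    (u : (Fin d → ℝ) → ℝ) (hu : u ∈ Submodule.span ℝ {u | ∃ f : Fin d → ℝ → ℝ, (∀ i, P i (f i)) ∧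
      u = fun x => ∏ i, f i (x i)}) :
    ∃ c : (Fin d → K) → ℝ, (∀ κ, (∃ i, ¬ supp i (κ i)) → c κ = 0) ∧ u = T (fun _ => e) c := by
  classical
  induction hu using Submodule.span_induction with
  | mem u hu =>
    obtain ⟨f, hf, rfl⟩ := hu
    choose y hy hfy using fun i => h i (f i) (hf i)
    refine ⟨fun κ => ∏ i, y i (κ i), fun κ ⟨i, hi⟩ => Finset.prod_eq_zero (Finset.mem_univ i) (hy i _ hi), ?_⟩
    funext x
    have : ∀ i, f i (x i) = ∑ k, y i k * e k (x i) := fun i => by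
      conv_lhs => rw [hfy i]
      simp
    simp only [this, T]
    rw [Finset.prod_univ_sum, Fintype.piFinset_univ]
    refine Finset.sum_congr rfl fun κ _ => ?_
    rw [Finset.prod_mul_distrib]
  | zero => exact ⟨0, fun _ _ => rfl, by funext x; simp [T]⟩
  | add u v _ _ h1 h2 =>
    obtain ⟨c, hc, rfl⟩ := h1
    obtain ⟨c', hc', rfl⟩ := h2
    exact ⟨c + c', fun κ hκ => by simp [hc κ hκ, hc' κ hκ], by
      funext x; simp [T, add_mul, Finset.sum_add_distrib]⟩
  | smul a u _ h1 =>
    obtain ⟨c, hc, rfl⟩ := h1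
    exact ⟨a • c, fun κ hκ => by simp [hc κ hκ], by
      funext x; simp [T, mul_assoc, Finset.mul_sum]⟩

/-- directional family -/
def Fd (e : K → ℝ → ℝ) (i : Fin d) : Fin d → K → ℝ → ℝ :=
  fun j k => if j = i then deriv (e k) else e k

lemma Fd_bm {m : ℕ} {e : K → ℝ → ℝ} (he : ∀ k, W m (e k)) (i j : Fin d) (k : K) : BM m (Fd e i j k) := by
  unfold Fd
  split_ifs
  · exact (he k).2.2
  · exact (he k).bm

lemma ae_coord (m : ℕ) (i : Fin d) : ∀ᵐ x : Fin d → ℝ, x i ∉ knots m :=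
  (Measure.quasiMeasurePreserving_eval (fun _ : Fin d => (volume : Measure ℝ)) i).ae (ae_knots m)

lemma pd_T {n m : ℕ} {e : K → ℝ → ℝ} (he : ∀ k, W m (e k)) (c : (Fin (n + 1) → K) → ℝ) (i : Fin (n + 1))
    {x : Fin (n + 1) → ℝ} (hx : x i ∉ knots m) :
    pd (n + 1) i (T (fun _ => e) c) x = T (Fd e i) c x := by
  unfold pd T
  refine HasDerivAt.deriv ?_
  refine HasDerivAt.fun_sum fun κ _ => ?_
  refine HasDerivAt.const_mul _ ?_
  have h1 : (fun t => ∏ j, e (κ j) (Function.update x i t j)) =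
      fun t => e (κ i) t * ∏ j, e (κ (i.succAbove j)) (x (i.succAbove j)) := by
    funext t
    rw [Fin.prod_univ_succAbove _ i]
    simp [Fin.succAbove_ne]
  have h2 : (∏ j, Fd e i j (κ j) (x j)) = deriv (e (κ i)) (x i) *
      ∏ j, e (κ (i.succAbove j)) (x (i.succAbove j)) := by
    rw [Fin.prod_univ_succAbove _ i]
    simp [Fd, Fin.succAbove_ne]
  rw [h1, h2]
  exact ((he _).2.1 _ hx).hasDerivAt.mul_const _

def A (e : K → ℝ → ℝ) (i : Fin d) (c : (Fin d → K) → ℝ) : ℝ := ∫ x in cube d, T (Fd e i) c x ^ 2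

lemma h1semiSqD_T {n m : ℕ} {e : K → ℝ → ℝ} (he : ∀ k, W m (e k)) (c : (Fin (n + 1) → K) → ℝ) :
    h1semiSqD (n + 1) (T (fun _ => e) c) = ∑ i, A e i c := by
  unfold h1semiSqD A
  rw [← integral_finsetSum _ (fun i _ => by
    have := T_mul_int (Fd_bm he i) (Fd_bm he i) c c
    simp only [pow_two]
    exact this)]
  apply integral_congr_ae
  apply ae_restrict_of_ae
  filter_upwards [ae_all_iff.2 (fun i => ae_coord m i)] with x hx
  exact Finset.sum_congr rfl fun i _ => by rw [pd_T he c i (hx i)]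

lemma BM.sum {m : ℕ} {f : K → ℝ → ℝ} (s : Finset K) (hf : ∀ l, BM m (f l)) :
    BM m (fun x => ∑ l ∈ s, f l x) := by
  classical
  induction s using Finset.induction_on with
  | empty => simpa using BM.const (m := m) 0
  | insert a s ha ih =>
    simp only [Finset.sum_insert ha]
    exact (hf a).add ih

lemma h1semiSq_sum {m : ℕ} {e : K → ℝ → ℝ} (he : ∀ k, W m (e k)) (y : K → ℝ) :
    h1semiSq (fun x => ∑ k, y k * e k x) = ∑ k, ∑ l, y k * y l * ip0 (deriv (e k)) (deriv (e l)) := by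
  rw [h1semiSq, Ioo_eq]
  rw [interval_congr (m := m) (g := fun x => ∑ k, ∑ l, y k * y l * (deriv (e k) x * deriv (e l) x)) zero_le_one]
  · have hb : ∀ k l, BM m (fun x => y k * y l * (deriv (e k) x * deriv (e l) x)) := fun k l =>
      ((he k).2.2.mul (he l).2.2).const_mul _
    have hi : ∀ k, IntervalIntegrable (fun x => ∑ l, y k * y l * (deriv (e k) x * deriv (e l) x)) volume 0 1 := by
      intro k
      exact (BM.sum Finset.univ (hb k)).ii
    rw [intervalIntegral.integral_finsetSum (fun k _ => hi k)]
    refine Finset.sum_congr rfl fun k _ => ?_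
    rw [intervalIntegral.integral_finsetSum (fun l _ => (hb k l).ii)]
    refine Finset.sum_congr rfl fun l _ => ?_
    rw [intervalIntegral.integral_const_mul, ip0_eq]
  · intro x _ hk
    have : HasDerivAt (fun x => ∑ k, y k * e k x) (∑ k, y k * deriv (e k) x) x :=
      HasDerivAt.fun_sum fun k _ => ((he k).2.1 x hk).hasDerivAt.const_mul _
    rw [this.deriv, pow_two, Finset.sum_mul_sum]
    exact Finset.sum_congr rfl fun k _ => Finset.sum_congr rfl fun l _ => by ring

lemma A_eq [DecidableEq K] {n m : ℕ} {e : K → ℝ → ℝ} (he : ∀ k, W m (e k))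
    (hon : ∀ k l, ip0 (e k) (e l) = if k = l then 1 else 0) (i : Fin (n + 1)) (c : (Fin (n + 1) → K) → ℝ) :
    A e i c = ∑ ρ : Fin n → K, h1semiSq (fun x => ∑ k, c (i.insertNth k ρ) * e k x) := by
  have h0 : A e i c = ∫ x in cube (n + 1), T (Fd e i) c x * T (Fd e i) c x := by
    simp only [A, pow_two]
  rw [h0, T_integral (Fd_bm he i) (Fd_bm he i)]
  simp only [h1semiSq_sum he]
  rw [← (Fin.insertNthEquiv (fun _ => K) i).sum_comp, Fintype.sum_prod_type, Finset.sum_comm]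
  refine Finset.sum_congr rfl fun ρ _ => Finset.sum_congr rfl fun k _ => ?_
  rw [← (Fin.insertNthEquiv (fun _ => K) i).sum_comp, Fintype.sum_prod_type]
  refine Finset.sum_congr rfl fun l _ => ?_
  have hp : ∀ σ : Fin n → K, (∏ j, ip0 (Fd e i j (i.insertNth (α := fun _ => K) k ρ j))
      (Fd e i j (i.insertNth (α := fun _ => K) l σ j))) =
      if ρ = σ then ip0 (deriv (e k)) (deriv (e l)) else 0 := by
    intro σ
    rw [Fin.prod_univ_succAbove _ i]
    simp only [Fd, Fin.insertNth_apply_same, Fin.insertNth_apply_succAbove, Fin.succAbove_ne, if_true, if_false, hon]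
    split_ifs with h
    · subst h; simp
    · obtain ⟨j, hj⟩ := Function.ne_iff.1 h
      rw [Finset.prod_eq_zero (Finset.mem_univ j) (by simp [hj]), mul_zero]
  simp only [Fin.insertNthEquiv_apply, hp]
  rw [Finset.sum_eq_single ρ]
  · rw [if_pos rfl]; rfl
  · intro σ _ hσ
    simp [hσ.symm]
  · simp

lemma h1semiSq_nonneg (u : ℝ → ℝ) : 0 ≤ h1semiSq u := integral_nonneg fun _ => sq_nonneg _

lemma A_nonneg (e : K → ℝ → ℝ) (i : Fin d) (c : (Fin d → K) → ℝ) : 0 ≤ A e i c :=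
  integral_nonneg fun _ => sq_nonneg _

/-- restriction of the coefficients to a type -/
def cr (τ : K → Bool) (c : (Fin d → K) → ℝ) (α : Fin d → Bool) : (Fin d → K) → ℝ :=
  fun κ => if (fun j => τ (κ j)) = α then c κ else 0

lemma A_cr_le [DecidableEq K] {n m : ℕ} {e : K → ℝ → ℝ} (he : ∀ k, W m (e k))
    (hon : ∀ k l, ip0 (e k) (e l) = if k = l then 1 else 0) (τ : K → Bool) (C : ℝ) (hC : 0 ≤ C)
    (hst : ∀ (y : K → ℝ) (b : Bool), h1semiSq (fun x => ∑ k, (if τ k = b then y k else 0) * e k x) ≤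
      C * h1semiSq (fun x => ∑ k, y k * e k x))
    (i : Fin (n + 1)) (c : (Fin (n + 1) → K) → ℝ) (α : Fin (n + 1) → Bool) :
    A e i (cr τ c α) ≤ C * A e i c := by
  rw [A_eq he hon, A_eq he hon, Finset.mul_sum]
  refine Finset.sum_le_sum fun ρ _ => ?_
  by_cases hρ : ∀ j, τ (ρ j) = α (i.succAbove j)
  · have : ∀ k, cr τ c α (i.insertNth k ρ) = if τ k = α i then c (i.insertNth k ρ) else 0 := by
      intro k
      unfold cr
      congr 1
      rw [funext_iff, Fin.forall_iff_succAbove i]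
      simp [hρ]
    simp only [this]
    exact hst (fun k => c (i.insertNth k ρ)) (α i)
  · have : ∀ k, cr τ c α (i.insertNth k ρ) = 0 := by
      intro k
      unfold cr
      rw [if_neg]
      rw [funext_iff, Fin.forall_iff_succAbove i]
      simp only [Fin.insertNth_apply_succAbove]
      tauto
    simp only [this, zero_mul, Finset.sum_const_zero]
    refine le_trans (le_of_eq ?_) (mul_nonneg hC (h1semiSq_nonneg _))
    simp [h1semiSq]

lemma T_cr (F : Fin d → K → ℝ → ℝ) (τ : K → Bool) (c : (Fin d → K) → ℝ) (x : Fin d → ℝ) :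
    T F c x = ∑ α, T F (cr τ c α) x := by
  unfold T cr
  rw [Finset.sum_comm]
  refine Finset.sum_congr rfl fun κ _ => ?_
  simp

lemma A_le_cr {m : ℕ} {e : K → ℝ → ℝ} (he : ∀ k, W m (e k)) (τ : K → Bool)
    (i : Fin d) (c : (Fin d → K) → ℝ) : A e i c ≤ 2 ^ d * ∑ α, A e i (cr τ c α) := by
  have hi : ∀ c, IntegrableOn (fun x => T (Fd e i) c x ^ 2) (cube d) := fun c => by
    have := T_mul_int (Fd_bm he i) (Fd_bm he i) c c
    simpa only [pow_two] using this
  unfold A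
  rw [← integral_finsetSum _ (fun α _ => hi _), ← integral_const_mul]
  refine integral_mono (hi c) ((integrable_finsetSum _ fun α _ => hi _).const_mul _) fun x => ?_
  simp only [T_cr (Fd e i) τ c x]
  have := sq_sum_le_card_mul_sum_sq (s := (Finset.univ : Finset (Fin d → Bool)))
    (f := fun α => T (Fd e i) (cr τ c α) x)
  simpa using this

lemma prod_delta [DecidableEq K] {e : K → ℝ → ℝ}
    (hon : ∀ k l, ip0 (e k) (e l) = if k = l then 1 else 0) (κ l : Fin d → K) :
    (∏ j, ip0 (e (κ j)) (e (l j))) = if κ = l then 1 else 0 := by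
  simp only [hon]
  split_ifs with h
  · subst h; simp
  · obtain ⟨j, hj⟩ := Function.ne_iff.1 h
    exact Finset.prod_eq_zero (Finset.mem_univ j) (by simp [hj])

lemma l2_T [DecidableEq K] {m : ℕ} {e : K → ℝ → ℝ} (he : ∀ k, W m (e k))
    (hon : ∀ k l, ip0 (e k) (e l) = if k = l then 1 else 0) (c : (Fin d → K) → ℝ) :
    l2normSqD d (T (fun _ => e) c) = ∑ κ, c κ ^ 2 := by
  unfold l2normSqD
  simp only [pow_two]
  rw [T_integral (fun _ k => (he k).bm) (fun _ k => (he k).bm)]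
  simp [prod_delta hon]

lemma ipd_T [DecidableEq K] {m : ℕ} {e : K → ℝ → ℝ} (he : ∀ k, W m (e k))
    (hon : ∀ k l, ip0 (e k) (e l) = if k = l then 1 else 0) (c : (Fin d → K) → ℝ) (κ : Fin d → K) :
    ipd d (T (fun _ => e) c) (fun x => ∏ j, e (κ j) (x j)) = c κ := by
  have : (fun x : Fin d → ℝ => ∏ j, e (κ j) (x j)) = T (fun _ => e) (Pi.single κ 1) := by
    funext x
    unfold T
    rw [Finset.sum_eq_single κ]
    · simp
    · intro l _ hl; simp [hl]
    · simp
  rw [this, ipd, T_integral (fun _ k => (he k).bm) (fun _ k => (he k).bm)]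
  simp [prod_delta hon]
  simp [Pi.single_apply]

lemma l2_cr (τ : K → Bool) (c : (Fin d → K) → ℝ) : ∑ α, ∑ κ, cr τ c α κ ^ 2 = ∑ κ, c κ ^ 2 := by
  rw [Finset.sum_comm]
  refine Finset.sum_congr rfl fun κ _ => ?_
  unfold cr
  simp [ite_pow]

end tens

theorem stable_splitting_nd :
    ∀ d : ℕ, 1 ≤ d → ∃ c : ℝ, 0 < c ∧ ∀ m p : ℕ, 1 ≤ m → 1 ≤ p →
      ∀ u : (Fin d → ℝ) → ℝ, u ∈ TensorSpline d m p →
      ∀ v : (Fin d → Bool) → (Fin d → ℝ) → ℝ,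
        (∀ α, IsL2ProjSub d m p α u (v α)) →
        (c⁻¹ * h1semiSqD d u ≤ ∑ α : Fin d → Bool, h1semiSqD d (v α) ∧
          ∑ α : Fin d → Bool, h1semiSqD d (v α) ≤ c * h1semiSqD d u) ∧
        (c⁻¹ * h1normSqD d u ≤ ∑ α : Fin d → Bool, h1normSqD d (v α) ∧
          ∑ α : Fin d → Bool, h1normSqD d (v α) ≤ c * h1normSqD d u) := by
  intro d hd
  obtain ⟨n, rfl⟩ : ∃ n, d = n + 1 := ⟨d - 1, by omega⟩
  have h2d : (1 : ℝ) ≤ 2 ^ (n + 1) := one_le_pow₀ (by norm_num)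
  refine ⟨54 * 2 ^ (n + 1), by positivity, ?_⟩
  intro m p hm hp u hu v hv
  obtain ⟨n0, n1, e, hC, hon, hsC, hsS⟩ := exists_basis p hm
  have hspl : ∀ b f, IsSplineC m p b f → IsSpline m p f := by
    rintro (_ | _) f h
    · exact h.1
    · exact h.1
  have heW : ∀ k, W m (e k) := fun k => (hspl _ _ (hC k)).W hm
  set τ : Fin n0 ⊕ Fin n1 → Bool := fun k => k.isRight with hτ
  obtain ⟨c, _, rfl⟩ := span_expand (d := n + 1) e (fun _ => IsSpline m p) (fun _ _ => True)
    (fun i f hf => by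
      obtain ⟨y, hy⟩ := hsS f hf
      exact ⟨y, fun _ h => absurd trivial h, hy⟩) u hu
  have hvα : ∀ α, v α = T (fun _ => e) (cr τ c α) := by
    intro α
    obtain ⟨hmem, horth⟩ := hv α
    obtain ⟨c', hc', hvc⟩ := span_expand (d := n + 1) e (fun i => IsSplineC m p (α i)) (fun i k => τ k = α i)
      (fun i f hf => hsC _ f hf) _ hmem
    rw [hvc]
    congr 1
    funext κ
    unfold cr
    split_ifs with h
    · have hκ : (fun x : Fin (n + 1) → ℝ => ∏ j, e (κ j) (x j)) ∈ TensorSplineSub (n + 1) m p α := by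
        refine Submodule.subset_span ⟨fun j => e (κ j), fun j => ?_, rfl⟩
        rw [← h]
        exact hC _
      have h1 := horth _ hκ
      have h2 : T (fun _ => e) c - v α = T (fun _ => e) (c - c') := by
        rw [hvc]; funext x; simp [T, sub_mul, Finset.sum_sub_distrib]
      rw [h2, ipd_T heW hon] at h1
      simp only [Pi.sub_apply] at h1
      linarith
    · apply hc'
      exact Function.ne_iff.1 h
  have hmem : ∀ (y : Fin n0 ⊕ Fin n1 → ℝ) (b : Bool),
      IsSplineC m p b (fun x => ∑ k, (if τ k = b then y k else 0) * e k x) := by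
    intro y b
    have e1 : (fun x => ∑ k, (if τ k = b then y k else 0) * e k x) =
        ∑ k, (if τ k = b then y k else 0) • e k := by
      funext x; simp only [Finset.sum_apply, Pi.smul_apply, smul_eq_mul]
    rw [e1]
    cases b
    · refine isSpline0_iff.2 ((SpS 1 m p hm).sum_mem fun k _ => ?_)
      by_cases h : τ k = false
      · have := hC k
        rw [show k.isRight = false from h] at this
        exact Submodule.smul_mem _ _ (isSpline0_iff.1 this)
      · rw [if_neg h, zero_smul]; exact Submodule.zero_mem _
    · refine (S1 m p hm).sum_mem fun k _ => ?_
      by_cases h : τ k = true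
      · have := hC k
        rw [show k.isRight = true from h] at this
        exact Submodule.smul_mem _ _ this
      · rw [if_neg h, zero_smul]; exact Submodule.zero_mem _
  have hst : ∀ (y : Fin n0 ⊕ Fin n1 → ℝ) (b : Bool),
      h1semiSq (fun x => ∑ k, (if τ k = b then y k else 0) * e k x) ≤
      54 * h1semiSq (fun x => ∑ k, y k * e k x) := by
    intro y b
    have := stable_1d hm hp (hmem y false) (hmem y true)
    have e2 : (fun x => (∑ k, (if τ k = false then y k else 0) * e k x) +
        ∑ k, (if τ k = true then y k else 0) * e k x) = fun x => ∑ k, y k * e k x := by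
      funext x
      rw [← Finset.sum_add_distrib]
      refine Finset.sum_congr rfl fun k _ => ?_
      cases τ k <;> simp
    rw [e2] at this
    cases b
    · exact this.1
    · exact this.2
  have hup : ∑ α, h1semiSqD (n + 1) (v α) ≤ 54 * 2 ^ (n + 1) * h1semiSqD (n + 1) (T (fun _ => e) c) := by
    have h1 : ∀ α, h1semiSqD (n + 1) (v α) ≤ 54 * h1semiSqD (n + 1) (T (fun _ => e) c) := by
      intro α
      rw [hvα, h1semiSqD_T heW, h1semiSqD_T heW, Finset.mul_sum]
      exact Finset.sum_le_sum fun i _ => A_cr_le heW hon τ 54 (by norm_num) hst i c α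
    refine (Finset.sum_le_sum fun α _ => h1 α).trans (le_of_eq ?_)
    simp
    ring
  have hlow : h1semiSqD (n + 1) (T (fun _ => e) c) ≤ 2 ^ (n + 1) * ∑ α, h1semiSqD (n + 1) (v α) := by
    simp only [hvα, h1semiSqD_T heW]
    rw [Finset.sum_comm, Finset.mul_sum]
    exact Finset.sum_le_sum fun i _ => A_le_cr heW τ i c
  have hl2 : ∑ α, l2normSqD (n + 1) (v α) = l2normSqD (n + 1) (T (fun _ => e) c) := by
    simp only [hvα, l2_T heW hon, l2_cr]
  have nl2 : 0 ≤ l2normSqD (n + 1) (T (fun _ => e) c) := integral_nonneg fun _ => sq_nonneg _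
  have nS : 0 ≤ ∑ α, h1semiSqD (n + 1) (v α) := Finset.sum_nonneg fun α _ =>
    integral_nonneg fun _ => Finset.sum_nonneg fun _ _ => sq_nonneg _
  have hpos : (0 : ℝ) < 54 * 2 ^ (n + 1) := by positivity
  simp only [h1normSqD, Finset.sum_add_distrib, hl2]
  refine ⟨⟨?_, hup⟩, ?_, ?_⟩
  · rw [inv_mul_le_iff₀ hpos]
    nlinarith
  · rw [inv_mul_le_iff₀ hpos]
    nlinarith
  · nlinarith

end SplineMG
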